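/- arXiv:2505.15937 — 2 statements merged into one kernel-verified Lean document; each statement's English description precedes it below -/
import Mathlib

section
/- Let (λ_n)_{n≥1} be positive real numbers satisfying (i) Σ_{n≥1} 1/λ_n = +∞ and (ii) the doubling condition: there exists C > 1 such that C⁻¹ λ_n ≤ λ_k ≤ C λ_n whenever n ≥ 1 and n ≤ k ≤ 2n; assume also λ_n ≥ 1 for all n. Fix a ∈ 𝕋. Then for every f ∈ L²(𝕋, m) with 0 ≤ f ≤ 2 m-a.e. and ‖f‖_{ℓ²(λ)} < ∞, every nonempty compact set E ⊆ 𝕋 containing the support of the measure f·m, and every δ > 0, there exist g ∈ L²(𝕋, m) with 0 ≤ g ≤ 2 m-a.e. and ‖g‖_{ℓ²(λ)} < ∞, and a nonempty compact set K ⊆ 𝕋 containing the support of g·m, such that K does not meet some open arc containing a, and d_𝒞(E,K) + ‖f − g‖_{ℓ²(λ)} < δ. -/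
open MeasureTheory Filter Topology

noncomputable section

/-- Normalized Haar (arc-length) probability measure on the circle `𝕋 = ℝ/ℤ`. -/
def hm : Measure UnitAddCircle := AddCircle.haarAddCircle

/-- Fourier coefficients of a real-valued function on the circle. -/
def fc (f : UnitAddCircle → ℝ) (n : ℤ) : ℂ := fourierCoeff (fun x => (f x : ℂ)) n

/-- The support of the measure `f·m`: the complement of the largest open set on which `f`
vanishes `m`-a.e. -/
def measSupport (f : UnitAddCircle → ℝ) : Set UnitAddCircle :=
  (⋃₀ {U : Set UnitAddCircle | IsOpen U ∧ ∀ᵐ x ∂hm, x ∈ U → f x = 0})ᶜ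

/-- The Hausdorff-type metric `d_𝒞(E,K) = sup_{ζ∈E} dist(ζ,K) + sup_{ξ∈K} dist(ξ,E)` on
nonempty compact subsets of the circle. -/
def dC (E K : Set UnitAddCircle) : ℝ :=
  (⨆ x : E, Metric.infDist (x : UnitAddCircle) K) +
    ⨆ y : K, Metric.infDist (y : UnitAddCircle) E

/-- The weighted `ℓ²(λ)` distance `‖f − g‖_{ℓ²(λ)}`. -/
def dlam (lam : ℕ → ℝ) (f g : UnitAddCircle → ℝ) : ℝ :=
  Real.sqrt (∑' n : ℤ, ‖fc f n - fc g n‖ ^ 2 * lam n.natAbs)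

/-!
If `β` is a bump on the line which equals `1` near `0` and has sufficiently many vanishing moments,
the `n`-th Fourier coefficient of its dilate `β (N t)` is small unless `|n|` is comparable to `N`.
Under the doubling condition, dilates of very different scales are therefore almost orthogonal in
`ℓ²(λ)`, and a Schur-type estimate bounds the squared norm of `∑_{N ∈ I} λ_N⁻¹ β (N t)` by a
multiple of `∑_{N ∈ I} λ_N⁻¹`. So the average of the dilates with weights `λ_N⁻¹` has squared norm
`O((∑_{N ∈ I} λ_N⁻¹)⁻¹)`, and `∑ λ_N⁻¹ = ∞` yields continuous peak functions `φ` with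
`-ε ≤ φ ≤ 1`, equal to `1` near `a`, and of arbitrarily small norm.

A mollification of `f` is close to `f` and is a multiplier of `ℓ²(λ)`, because shifts of `ℓ²(λ)`
have polynomially growing norms. Hence multiplying it by `1 - φ` is a small perturbation
that vanishes near `a`; division by `1 + ε` restores the upper bound. The set `K` is a closed
thickening of `E` with a small ball around `a` removed.
-/

open scoped ContDiff FourierTransform Convolution

section WeightedSequences

variable {ι E : Type*} [NormedAddCommGroup E] {w : ι → ℝ} {u v : ι → E}

/-- Membership in the weighted sequence space `ℓ²(w)`. -/
def MemWeightedL2 (w : ι → ℝ) (u : ι → E) : Prop :=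
  Summable fun i => ‖u i‖ ^ 2 * w i

/-- The norm of `ℓ²(w)`, with junk value `0` off the space. -/
def weightedNorm (w : ι → ℝ) (u : ι → E) : ℝ :=
  √(∑' i, ‖u i‖ ^ 2 * w i)

lemma weightedNorm_nonneg : 0 ≤ weightedNorm w u := Real.sqrt_nonneg _

lemma sq_weightedNorm (hw : ∀ i, 0 ≤ w i) : weightedNorm w u ^ 2 = ∑' i, ‖u i‖ ^ 2 * w i :=
  Real.sq_sqrt (tsum_nonneg fun i => mul_nonneg (sq_nonneg _) (hw i))

lemma memWeightedL2_of_sum_le (hw : ∀ i, 0 ≤ w i) {B : ℝ}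
    (h : ∀ s : Finset ι, ∑ i ∈ s, ‖u i‖ ^ 2 * w i ≤ B) : MemWeightedL2 w u :=
  summable_of_sum_le (fun i => mul_nonneg (sq_nonneg _) (hw i)) h

lemma sq_weightedNorm_le_of_sum_le (hw : ∀ i, 0 ≤ w i) {B : ℝ}
    (h : ∀ s : Finset ι, ∑ i ∈ s, ‖u i‖ ^ 2 * w i ≤ B) : weightedNorm w u ^ 2 ≤ B :=
  (sq_weightedNorm hw).trans_le ((memWeightedL2_of_sum_le hw h).tsum_le_of_sum_le h)

lemma MemWeightedL2.of_norm_le (hw : ∀ i, 0 ≤ w i) (hv : MemWeightedL2 w v)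
    (h : ∀ i, ‖u i‖ ≤ ‖v i‖) : MemWeightedL2 w u :=
  hv.of_nonneg_of_le (fun i => mul_nonneg (sq_nonneg _) (hw i)) fun i => by
    gcongr
    exacts [hw i, h i]

lemma MemWeightedL2.const_smul {𝕜 : Type*} [NormedField 𝕜] [NormedSpace 𝕜 E]
    (hu : MemWeightedL2 w u) (c : 𝕜) : MemWeightedL2 w (c • u) := by
  simpa [MemWeightedL2, norm_smul, mul_pow, mul_assoc] using hu.mul_left (‖c‖ ^ 2)

lemma weightedNorm_const_smul {𝕜 : Type*} [NormedField 𝕜] [NormedSpace 𝕜 E] (c : 𝕜) :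
    weightedNorm w (c • u) = ‖c‖ * weightedNorm w u := by
  simp only [weightedNorm, Pi.smul_apply, norm_smul, mul_pow, mul_assoc, tsum_mul_left,
    Real.sqrt_mul (sq_nonneg ‖c‖), Real.sqrt_sq (norm_nonneg c)]

section NormedSpace

variable [NormedSpace ℝ E]

lemma norm_sqrt_smul_sq (hw : ∀ i, 0 ≤ w i) (i : ι) :
    ‖√(w i) • u i‖ ^ 2 = ‖u i‖ ^ 2 * w i := by
  rw [norm_smul, mul_pow, Real.norm_eq_abs, sq_abs, Real.sq_sqrt (hw i), mul_comm]

/-- The isometric embedding `u ↦ √w • u` of `ℓ²(w)` into the unweighted `ℓ²`. -/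
def MemWeightedL2.toLp (hw : ∀ i, 0 ≤ w i) (hu : MemWeightedL2 w u) : lp (fun _ : ι => E) 2 :=
  ⟨fun i => √(w i) • u i, memℓp_gen <| by
    simpa [MemWeightedL2, norm_sqrt_smul_sq hw] using hu⟩

lemma MemWeightedL2.norm_toLp (hw : ∀ i, 0 ≤ w i) (hu : MemWeightedL2 w u) :
    ‖hu.toLp hw‖ = weightedNorm w u := by
  rw [lp.norm_eq_tsum_rpow (by norm_num), weightedNorm, Real.sqrt_eq_rpow]
  simp [MemWeightedL2.toLp, norm_sqrt_smul_sq hw]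

lemma memWeightedL2_of_lp (hw : ∀ i, 0 ≤ w i) (U : lp (fun _ : ι => E) 2)
    (hU : ∀ i, U i = √(w i) • u i) : MemWeightedL2 w u := by
  have h := lp.memℓp U
  rw [memℓp_gen_iff (by norm_num)] at h
  simpa [MemWeightedL2, hU, norm_sqrt_smul_sq hw] using h

lemma MemWeightedL2.add (hw : ∀ i, 0 ≤ w i) (hu : MemWeightedL2 w u) (hv : MemWeightedL2 w v) :
    MemWeightedL2 w (u + v) :=
  memWeightedL2_of_lp hw (hu.toLp hw + hv.toLp hw) fun _ => (smul_add _ _ _).symm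

lemma weightedNorm_add_le (hw : ∀ i, 0 ≤ w i) (hu : MemWeightedL2 w u) (hv : MemWeightedL2 w v) :
    weightedNorm w (u + v) ≤ weightedNorm w u + weightedNorm w v := by
  have h : (hu.add hw hv).toLp hw = hu.toLp hw + hv.toLp hw :=
    Subtype.ext <| funext fun _ => smul_add _ _ _
  rw [← (hu.add hw hv).norm_toLp hw, ← hu.norm_toLp hw, ← hv.norm_toLp hw, h]
  exact norm_add_le _ _

lemma MemWeightedL2.sub (hw : ∀ i, 0 ≤ w i) (hu : MemWeightedL2 w u) (hv : MemWeightedL2 w v) :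
    MemWeightedL2 w (u - v) := by
  simpa [sub_eq_add_neg] using hu.add hw (hv.const_smul (-1 : ℝ))

lemma weightedNorm_sub_le_add {z : ι → E} (hw : ∀ i, 0 ≤ w i) (hu : MemWeightedL2 w u)
    (hv : MemWeightedL2 w v) (hz : MemWeightedL2 w z) :
    weightedNorm w (u - z) ≤ weightedNorm w (u - v) + weightedNorm w (v - z) := by
  simpa using weightedNorm_add_le hw (hu.sub hw hv) (hv.sub hw hz)

section Minkowski

variable [CompleteSpace E] {κ : Type*} {V : κ → ι → E} {b : κ → ℝ}

lemma exists_lp_eq_of_hasSum (hw : ∀ i, 0 ≤ w i) (hV : ∀ k, MemWeightedL2 w (V k))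
    (hb : Summable b) (hVb : ∀ k, weightedNorm w (V k) ≤ b k)
    (hsum : ∀ i, HasSum (fun k => V k i) (u i)) :
    ∃ U : lp (fun _ : ι => E) 2, (∀ i, U i = √(w i) • u i) ∧ ‖U‖ ≤ ∑' k, b k := by
  have hnorm (k : κ) : ‖(hV k).toLp hw‖ ≤ b k := ((hV k).norm_toLp hw).trans_le (hVb k)
  have hS : Summable fun k => (hV k).toLp hw := .of_norm_bounded hb hnorm
  refine ⟨∑' k, (hV k).toLp hw, fun i => ?_, tsum_of_norm_bounded hb.hasSum hnorm⟩
  exact (hS.hasSum.mapL (lp.evalCLM ℝ (fun _ : ι => E) 2 i)).unique ((hsum i).const_smul (√(w i)))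

lemma memWeightedL2_of_hasSum (hw : ∀ i, 0 ≤ w i) (hV : ∀ k, MemWeightedL2 w (V k))
    (hb : Summable b) (hVb : ∀ k, weightedNorm w (V k) ≤ b k)
    (hsum : ∀ i, HasSum (fun k => V k i) (u i)) : MemWeightedL2 w u :=
  have ⟨U, hU, _⟩ := exists_lp_eq_of_hasSum hw hV hb hVb hsum
  memWeightedL2_of_lp hw U hU

lemma weightedNorm_le_tsum_of_hasSum (hw : ∀ i, 0 ≤ w i) (hV : ∀ k, MemWeightedL2 w (V k))
    (hb : Summable b) (hVb : ∀ k, weightedNorm w (V k) ≤ b k)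
    (hsum : ∀ i, HasSum (fun k => V k i) (u i)) : weightedNorm w u ≤ ∑' k, b k := by
  obtain ⟨U, hU, hUb⟩ := exists_lp_eq_of_hasSum hw hV hb hVb hsum
  have hu : MemWeightedL2 w u := memWeightedL2_of_lp hw U hU
  have h : hu.toLp hw = U := Subtype.ext <| funext fun i => (hU i).symm
  rwa [← hu.norm_toLp hw, h]

end Minkowski

end NormedSpace

section Translation

variable {G : Type*} [AddCommGroup G] {w : G → ℝ} {u : G → E} {k : G} {ν : ℝ}

lemma MemWeightedL2.comp_sub_right (hw : ∀ m, 0 ≤ w m) (hshift : ∀ m, w (m + k) ≤ ν ^ 2 * w m)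
    (hu : MemWeightedL2 w u) : MemWeightedL2 w fun m => u (m - k) := by
  rw [MemWeightedL2, ← (Equiv.addRight k).summable_iff]
  refine (hu.mul_left (ν ^ 2)).of_nonneg_of_le
    (fun m => mul_nonneg (sq_nonneg _) (hw _)) fun m => ?_
  simpa [mul_left_comm] using mul_le_mul_of_nonneg_left (hshift m) (sq_nonneg ‖u m‖)

lemma weightedNorm_comp_sub_right_le (hw : ∀ m, 0 ≤ w m) (hν : 0 ≤ ν)
    (hshift : ∀ m, w (m + k) ≤ ν ^ 2 * w m) (hu : MemWeightedL2 w u) :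
    weightedNorm w (fun m => u (m - k)) ≤ ν * weightedNorm w u := by
  have hk : Summable fun m => ‖u m‖ ^ 2 * w (m + k) := by
    simpa [Function.comp_def] using
      (Equiv.addRight k).summable_iff.mpr (hu.comp_sub_right hw hshift)
  refine Real.sqrt_le_iff.mpr ⟨mul_nonneg hν weightedNorm_nonneg, ?_⟩
  calc ∑' m, ‖u (m - k)‖ ^ 2 * w m = ∑' m, ‖u m‖ ^ 2 * w (m + k) := by
        rw [← (Equiv.addRight k).tsum_eq]
        simp
    _ ≤ ∑' m, ν ^ 2 * (‖u m‖ ^ 2 * w m) := hk.tsum_le_tsum (fun m => by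
        rw [mul_left_comm]
        exact mul_le_mul_of_nonneg_left (hshift m) (sq_nonneg _)) (hu.mul_left _)
    _ = (ν * weightedNorm w u) ^ 2 := by rw [tsum_mul_left, mul_pow, sq_weightedNorm hw]

end Translation

end WeightedSequences

section DoublingWeights

/-- The ratio of the smaller to the larger of two natural numbers, equal to `0` if one of them
vanishes. -/
def minRatio (m n : ℕ) : ℝ := min ((m : ℝ) / n) ((n : ℝ) / m)

lemma minRatio_comm (m n : ℕ) : minRatio m n = minRatio n m := min_comm _ _

lemma minRatio_nonneg (m n : ℕ) : 0 ≤ minRatio m n := le_min (by positivity) (by positivity)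

lemma minRatio_zero_left (n : ℕ) : minRatio 0 n = 0 := by simp [minRatio]

lemma minRatio_of_le {m n : ℕ} (h : m ≤ n) : minRatio m n = (m : ℝ) / n := by
  rcases m.eq_zero_or_pos with rfl | hm
  · simp [minRatio]
  have h' : (m : ℝ) ≤ n := by exact_mod_cast h
  have hm' : (0 : ℝ) < m := by exact_mod_cast hm
  exact min_eq_left <| ((div_le_one₀ (hm'.trans_le h')).2 h').trans ((one_le_div₀ hm').2 h')

lemma minRatio_le_one (m n : ℕ) : minRatio m n ≤ 1 := by
  wlog h : m ≤ n
  · exact minRatio_comm m n ▸ this n m (le_of_not_ge h)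
  exact (minRatio_of_le h).trans_le (div_le_one_of_le₀ (by exact_mod_cast h) n.cast_nonneg)

/-- A positive sequence is moderate when `λ_n / λ_m` is dominated by a power of the ratio of the
indices `m, n ≥ 1`; this is the form in which the doubling condition is used. -/
def IsModerate (lam : ℕ → ℝ) (C : ℝ) (q : ℕ) : Prop :=
  ∀ m n : ℕ, 1 ≤ m → 1 ≤ n → lam n * minRatio n m ^ q ≤ C * lam m

lemma apply_two_pow_mul_le {u : ℕ → ℝ} {C : ℝ} (hC : 0 ≤ C)
    (hu : ∀ n, 1 ≤ n → u (2 * n) ≤ C * u n) {m : ℕ} (hm : 1 ≤ m) (j : ℕ) :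
    u (2 ^ j * m) ≤ C ^ j * u m := by
  induction j with
  | zero => simp
  | succ j ih =>
    calc u (2 ^ (j + 1) * m) = u (2 * (2 ^ j * m)) := by ring_nf
      _ ≤ C * u (2 ^ j * m) := hu _ (Nat.mul_pos (by positivity) hm)
      _ ≤ C * (C ^ j * u m) := by gcongr
      _ = C ^ (j + 1) * u m := by ring

lemma le_mul_div_pow_of_doubling {u : ℕ → ℝ} {C : ℝ} {q : ℕ} (hC : 0 ≤ C) (hq : C ≤ 2 ^ q)
    (hpos : ∀ n, 0 < u n) (hu : ∀ n k, 1 ≤ n → n ≤ k → k ≤ 2 * n → u k ≤ C * u n)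
    {m n : ℕ} (hm : 1 ≤ m) (hmn : m ≤ n) :
    u n ≤ C * ((n : ℝ) / m) ^ q * u m := by
  set j := Nat.log 2 (n / m)
  have hlow : 2 ^ j * m ≤ n :=
    (Nat.le_div_iff_mul_le hm).1 (Nat.pow_log_le_self 2 (Nat.div_pos hmn hm).ne')
  have hupp : n ≤ 2 * (2 ^ j * m) := by
    have h := (Nat.div_lt_iff_lt_mul hm).1 (Nat.lt_pow_succ_log_self one_lt_two (n / m))
    exact h.le.trans_eq (by rw [Nat.succ_eq_add_one, pow_succ]; ring)
  have hpow : C ^ j ≤ ((n : ℝ) / m) ^ q := by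
    calc C ^ j ≤ (2 ^ q) ^ j := by gcongr
      _ = (2 ^ j) ^ q := by rw [← pow_mul, ← pow_mul, mul_comm]
      _ ≤ ((n : ℝ) / m) ^ q := by
        gcongr
        rw [le_div_iff₀ (by exact_mod_cast hm)]
        exact_mod_cast hlow
  calc u n ≤ C * u (2 ^ j * m) := hu _ _ (Nat.mul_pos (by positivity) hm) hlow hupp
    _ ≤ C * (C ^ j * u m) := by
      gcongr
      exact apply_two_pow_mul_le hC (fun n hn => hu n _ hn (by omega) le_rfl) hm j
    _ ≤ C * (((n : ℝ) / m) ^ q * u m) := by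
      gcongr
      exact (hpos m).le
    _ = C * ((n : ℝ) / m) ^ q * u m := (mul_assoc _ _ _).symm

lemma isModerate_of_doubling {lam : ℕ → ℝ} (hlam : ∀ n, 0 < lam n) {C : ℝ} (hC : 0 < C)
    (hdbl : ∀ n k : ℕ, 1 ≤ n → n ≤ k → k ≤ 2 * n → C⁻¹ * lam n ≤ lam k ∧ lam k ≤ C * lam n)
    {q : ℕ} (hq : C ≤ 2 ^ q) : IsModerate lam C q := by
  intro m n hm hn
  have hm' : (0 : ℝ) < m := by exact_mod_cast hm
  have hn' : (0 : ℝ) < n := by exact_mod_cast hn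
  rcases le_total m n with hmn | hnm
  · have h := le_mul_div_pow_of_doubling hC.le hq hlam
      (fun n k h₁ h₂ h₃ => (hdbl n k h₁ h₂ h₃).2) hm hmn
    rw [minRatio_comm, minRatio_of_le hmn, ← le_div_iff₀ (by positivity)]
    exact h.trans_eq (by rw [div_pow, div_pow]; field_simp)
  · have hinv (n k : ℕ) (h₁ : 1 ≤ n) (h₂ : n ≤ k) (h₃ : k ≤ 2 * n) :
        (lam k)⁻¹ ≤ C * (lam n)⁻¹ := by
      have h := inv_anti₀ (mul_pos (inv_pos.2 hC) (hlam n)) (hdbl n k h₁ h₂ h₃).1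
      rwa [mul_inv, inv_inv] at h
    have h := le_mul_div_pow_of_doubling hC.le hq (fun n => inv_pos.2 (hlam n)) hinv hn hnm
    rw [← div_eq_mul_inv, le_div_iff₀ (hlam n), inv_mul_le_iff₀ (hlam m)] at h
    rw [minRatio_of_le hnm, ← le_div_iff₀ (by positivity)]
    exact h.trans_eq (by rw [div_pow, div_pow]; field_simp)

lemma IsModerate.le_of_le_mul {lam : ℕ → ℝ} {C : ℝ} {q : ℕ} (h : IsModerate lam C q)
    (hlam : ∀ n, 0 < lam n) {m n : ℕ} (hm : 1 ≤ m) (hn : 1 ≤ n) {t : ℝ} (ht : 0 < t)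
    (hmn : m ≤ t * n) (hnm : n ≤ t * m) : lam n ≤ C * t ^ q * lam m := by
  have hm' : (0 : ℝ) < m := by exact_mod_cast hm
  have hn' : (0 : ℝ) < n := by exact_mod_cast hn
  have hratio : t⁻¹ ≤ minRatio n m :=
    le_min ((le_div_iff₀ hm').2 ((inv_mul_le_iff₀ ht).2 hmn))
      ((le_div_iff₀ hn').2 ((inv_mul_le_iff₀ ht).2 hnm))
  have h' : lam n * t⁻¹ ^ q ≤ C * lam m :=
    (mul_le_mul_of_nonneg_left (pow_le_pow_left₀ (inv_pos.2 ht).le hratio q) (hlam n).le).trans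
      (h m n hm hn)
  rw [inv_pow, mul_inv_le_iff₀ (by positivity)] at h'
  exact h'.trans_eq (by ring)

/-- The even extension of a sequence of weights to `ℤ`. -/
def evenExt (lam : ℕ → ℝ) (n : ℤ) : ℝ := lam n.natAbs

lemma exists_comparable_apply_max_one {lam : ℕ → ℝ} (hlam : ∀ n, 0 < lam n) :
    ∃ A : ℝ, 0 < A ∧ ∀ j, lam j ≤ A * lam (max j 1) ∧ lam (max j 1) ≤ A * lam j := by
  refine ⟨max 1 (max (lam 0 / lam 1) (lam 1 / lam 0)), by positivity, fun j => ?_⟩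
  rcases j.eq_zero_or_pos with rfl | hj
  · rw [max_eq_right zero_le_one, ← div_le_iff₀ (hlam 1), ← div_le_iff₀ (hlam 0)]
    exact ⟨(le_max_left _ _).trans (le_max_right _ _), (le_max_right _ _).trans (le_max_right _ _)⟩
  · rw [max_eq_left (Nat.succ_le_of_lt hj)]
    exact ⟨le_mul_of_one_le_left (hlam j).le (le_max_left _ _),
      le_mul_of_one_le_left (hlam j).le (le_max_left _ _)⟩

lemma IsModerate.const_nonneg {lam : ℕ → ℝ} {C : ℝ} {q : ℕ} (h : IsModerate lam C q)
    (hlam : ∀ n, 0 < lam n) : 0 ≤ C :=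
  nonneg_of_mul_nonneg_left
    ((mul_nonneg (hlam 1).le (pow_nonneg (minRatio_nonneg 1 1) q)).trans (h 1 1 le_rfl le_rfl))
    (hlam 1)

lemma max_natAbs_add_one_le (m k : ℤ) :
    (max (m + k).natAbs 1 : ℕ) ≤ (1 + |(k : ℝ)|) * (max m.natAbs 1 : ℕ) := by
  have h₁ : |(m : ℝ) + k| ≤ |(m : ℝ)| + |(k : ℝ)| := abs_add_le _ _
  have h₂ : (1 : ℝ) ≤ max |(m : ℝ)| 1 := le_max_right _ _
  have h₃ : |(m : ℝ)| ≤ max |(m : ℝ)| 1 := le_max_left _ _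
  push_cast [Nat.cast_natAbs]
  refine max_le ?_ ?_ <;> nlinarith [abs_nonneg (k : ℝ)]

/-- A bound, with constant `D`, for the norm of the shift by `k` on `ℓ²(w)`, where `w` is an even
weight that is moderate with exponent `q`. -/
def shiftBound (D : ℝ) (q : ℕ) (k : ℤ) : ℝ := D * (1 + |(k : ℝ)|) ^ q

lemma shiftBound_nonneg {D : ℝ} (hD : 0 ≤ D) (q : ℕ) (k : ℤ) : 0 ≤ shiftBound D q k :=
  mul_nonneg hD (by positivity)

lemma IsModerate.exists_evenExt_add_le {lam : ℕ → ℝ} {C : ℝ} {q : ℕ} (h : IsModerate lam C q)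
    (hlam : ∀ n, 0 < lam n) :
    ∃ D : ℝ, 0 ≤ D ∧ ∀ m k, evenExt lam (m + k) ≤ shiftBound D q k ^ 2 * evenExt lam m := by
  obtain ⟨A, hA, hcomp⟩ := exists_comparable_apply_max_one hlam
  have hC : 0 ≤ C := h.const_nonneg hlam
  refine ⟨max 1 (A * C * A), by positivity, fun m k => ?_⟩
  set t := 1 + |(k : ℝ)|
  have ht : 1 ≤ t := le_add_of_nonneg_right (abs_nonneg _)
  have hback : (max m.natAbs 1 : ℕ) ≤ t * (max (m + k).natAbs 1 : ℕ) := by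
    simpa [t] using max_natAbs_add_one_le (m + k) (-k)
  have hone : 1 ≤ shiftBound (max 1 (A * C * A)) q k :=
    one_le_mul_of_one_le_of_one_le (le_max_left _ _) (one_le_pow₀ ht)
  calc evenExt lam (m + k) ≤ A * lam (max (m + k).natAbs 1) := (hcomp _).1
    _ ≤ A * (C * t ^ q * lam (max m.natAbs 1)) := by
      gcongr
      exact h.le_of_le_mul hlam (le_max_right _ _) (le_max_right _ _) (by positivity) hback
        (max_natAbs_add_one_le m k)
    _ ≤ A * (C * t ^ q * (A * lam m.natAbs)) := by
      gcongr
      exact (hcomp _).2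
    _ = A * C * A * t ^ q * evenExt lam m := by rw [evenExt]; ring
    _ ≤ shiftBound (max 1 (A * C * A)) q k * evenExt lam m := by
      rw [shiftBound]
      gcongr
      exacts [(hlam _).le, le_max_right _ _]
    _ ≤ shiftBound (max 1 (A * C * A)) q k ^ 2 * evenExt lam m := by
      gcongr
      exacts [(hlam _).le, le_self_pow₀ hone two_ne_zero]

end DoublingWeights

section KernelSums

lemma sum_min_one_div_sq_le (n : ℕ) (s : Finset ℕ) :
    ∑ m ∈ s, min 1 (((n : ℝ) / m) ^ 2) ≤ 2 * n := by
  rcases n.eq_zero_or_pos with rfl | hn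
  · simp
  obtain ⟨M, hM⟩ := s.exists_nat_subset_range
  have hsmall : ∑ m ∈ Finset.Ioc 0 n, min 1 (((n : ℝ) / m) ^ 2) ≤ n := by
    simpa using Finset.sum_le_card_nsmul (Finset.Ioc 0 n) _ 1 fun m _ =>
      min_le_left (1 : ℝ) (((n : ℝ) / m) ^ 2)
  have hlarge : ∑ m ∈ Finset.Ioc n (max n M), min 1 (((n : ℝ) / m) ^ 2) ≤ n := by
    calc ∑ m ∈ Finset.Ioc n (max n M), min 1 (((n : ℝ) / m) ^ 2)
        ≤ ∑ m ∈ Finset.Ioc n (max n M), (n : ℝ) ^ 2 * ((m : ℝ) ^ 2)⁻¹ :=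
          Finset.sum_le_sum fun m _ => (min_le_right _ _).trans_eq (by rw [div_pow, div_eq_mul_inv])
      _ ≤ n ^ 2 * ((n : ℝ)⁻¹ - ((max n M : ℕ) : ℝ)⁻¹) := by
          rw [← Finset.mul_sum]
          gcongr
          exact sum_Ioc_inv_sq_le_sub hn.ne' (le_max_left _ _)
      _ ≤ n ^ 2 * (n : ℝ)⁻¹ := by
          gcongr
          exact sub_le_self _ (by positivity)
      _ = n := by field_simp
  have hsub : s ⊆ insert 0 (Finset.Ioc 0 n ∪ Finset.Ioc n (max n M)) := fun m hm => by
    have := Finset.mem_range.1 (hM hm)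
    simp only [Finset.mem_insert, Finset.mem_union, Finset.mem_Ioc]
    omega
  calc ∑ m ∈ s, min 1 (((n : ℝ) / m) ^ 2)
      ≤ ∑ m ∈ insert 0 (Finset.Ioc 0 n ∪ Finset.Ioc n (max n M)), min 1 (((n : ℝ) / m) ^ 2) :=
        Finset.sum_le_sum_of_subset_of_nonneg hsub fun _ _ _ => by positivity
    _ = ∑ m ∈ Finset.Ioc 0 n, min 1 (((n : ℝ) / m) ^ 2) +
          ∑ m ∈ Finset.Ioc n (max n M), min 1 (((n : ℝ) / m) ^ 2) := by
        rw [Finset.sum_insert (by simp), Finset.sum_union (Finset.Ioc_disjoint_Ioc_of_le le_rfl)]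
        simp
    _ ≤ 2 * n := by linarith

lemma sum_natAbs_le {g : ℕ → ℝ} {B : ℝ} (hg : ∀ s : Finset ℕ, ∑ m ∈ s, g m ≤ B) (F : Finset ℤ) :
    ∑ n ∈ F, g n.natAbs ≤ 2 * B := by
  have hhalf (F : Finset ℤ) (hF : Set.InjOn Int.natAbs F) : ∑ n ∈ F, g n.natAbs ≤ B := by
    rw [← Finset.sum_image hF]
    exact hg _
  rw [← Finset.sum_filter_add_sum_filter_not F (0 ≤ ·), two_mul]
  refine add_le_add (hhalf _ fun m hm n hn h => ?_) (hhalf _ fun m hm n hn h => ?_) <;>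
  · simp only [Finset.coe_filter, Set.mem_ofPred_eq] at hm hn
    omega

lemma minRatio_div (n N : ℕ) : minRatio n N / N = (n : ℝ)⁻¹ * min 1 (((n : ℝ) / N) ^ 2) := by
  rcases n.eq_zero_or_pos with rfl | hn
  · simp [minRatio]
  rcases N.eq_zero_or_pos with rfl | hN
  · simp
  have hn' : (0 : ℝ) < n := by exact_mod_cast hn
  have hN' : (0 : ℝ) < N := by exact_mod_cast hN
  rw [minRatio, ← min_div_div_right hN'.le, mul_min_of_nonneg _ _ (by positivity), min_comm]
  congr 1 <;> field_simp

lemma sum_minRatio_div_le (n : ℕ) (I : Finset ℕ) : ∑ N ∈ I, minRatio n N / N ≤ 2 := by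
  rcases n.eq_zero_or_pos with rfl | hn
  · simp [minRatio_zero_left]
  simp only [minRatio_div, ← Finset.mul_sum]
  rw [inv_mul_le_iff₀ (by exact_mod_cast hn), mul_comm]
  exact sum_min_one_div_sq_le n I

lemma sum_minRatio_natAbs_sq_le (N : ℕ) (F : Finset ℤ) :
    ∑ n ∈ F, minRatio n.natAbs N ^ 2 ≤ 4 * N := by
  have h := sum_natAbs_le (sum_min_one_div_sq_le N) F
  calc ∑ n ∈ F, minRatio n.natAbs N ^ 2
      ≤ ∑ n ∈ F, min 1 (((N : ℝ) / n.natAbs) ^ 2) := Finset.sum_le_sum fun n _ =>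
        le_min (pow_le_one₀ (minRatio_nonneg _ _) (minRatio_le_one _ _))
          (pow_le_pow_left₀ (minRatio_nonneg _ _) (min_le_right _ _) 2)
    _ ≤ 4 * N := h.trans_eq (by ring)

end KernelSums

section QuasiOrthogonality

variable {E : Type*} [NormedAddCommGroup E] [NormedSpace ℝ E] {lam : ℕ → ℝ} {C K : ℝ} {q : ℕ}
  {I : Finset ℕ} {u : ℕ → ℤ → E}

lemma sq_inv_mul_minRatio_pow_le (hlam : ∀ n, 0 < lam n) (hmod : IsModerate lam C q)
    {n N : ℕ} (hn : 1 ≤ n) (hN : 1 ≤ N) :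
    ((lam N)⁻¹ * (minRatio n N ^ (q + 2) / N)) ^ 2 ≤
      minRatio n N / N * (C / lam n * ((lam N)⁻¹ * (minRatio n N ^ 2 / N))) := by
  have hr : 0 ≤ minRatio n N := minRatio_nonneg n N
  have hlamN : 0 < lam N := hlam N
  have hC : 0 ≤ C := hmod.const_nonneg hlam
  have hquot : (lam N)⁻¹ * minRatio n N ^ q ≤ C / lam n := by
    rw [le_div_iff₀ (hlam n), mul_assoc, inv_mul_le_iff₀ hlamN, mul_comm (lam N),
      mul_comm _ (lam n)]
    exact hmod N n hN hn
  calc ((lam N)⁻¹ * (minRatio n N ^ (q + 2) / N)) ^ 2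
      = minRatio n N / N * ((lam N)⁻¹ * minRatio n N ^ q *
          ((lam N)⁻¹ * (minRatio n N ^ 2 / N))) * minRatio n N ^ (q + 1) := by ring
    _ ≤ minRatio n N / N * (C / lam n * ((lam N)⁻¹ * (minRatio n N ^ 2 / N))) * 1 := by
      have hC' : 0 ≤ C / lam n := div_nonneg hC (hlam n).le
      gcongr
      exact pow_le_one₀ hr (minRatio_le_one n N)
    _ = _ := mul_one _

lemma sq_sum_inv_mul_minRatio_pow_le (hlam : ∀ n, 0 < lam n) (hmod : IsModerate lam C q)
    (hI : ∀ N ∈ I, 1 ≤ N) (n : ℕ) :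
    (∑ N ∈ I, (lam N)⁻¹ * (minRatio n N ^ (q + 2) / N)) ^ 2 * lam n ≤
      2 * C * ∑ N ∈ I, (lam N)⁻¹ * (minRatio n N ^ 2 / N) := by
  rcases n.eq_zero_or_pos with rfl | hn
  · simp [minRatio_zero_left]
  have hdiv (k N : ℕ) : 0 ≤ minRatio n N ^ k / N :=
    div_nonneg (pow_nonneg (minRatio_nonneg n N) k) N.cast_nonneg
  have hterm (N : ℕ) : 0 ≤ C / lam n * ((lam N)⁻¹ * (minRatio n N ^ 2 / N)) :=
    mul_nonneg (div_nonneg (hmod.const_nonneg hlam) (hlam n).le)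
      (mul_nonneg (inv_pos.2 (hlam N)).le (hdiv 2 N))
  rw [← le_div_iff₀ (hlam n)]
  calc (∑ N ∈ I, (lam N)⁻¹ * (minRatio n N ^ (q + 2) / N)) ^ 2
      ≤ (∑ N ∈ I, minRatio n N / N) *
          ∑ N ∈ I, C / lam n * ((lam N)⁻¹ * (minRatio n N ^ 2 / N)) :=
        Finset.sum_sq_le_sum_mul_sum_of_sq_le_mul I (fun N _ => by simpa using hdiv 1 N)
          (fun N _ => hterm N) fun N hN => sq_inv_mul_minRatio_pow_le hlam hmod hn (hI N hN)
    _ ≤ 2 * ∑ N ∈ I, C / lam n * ((lam N)⁻¹ * (minRatio n N ^ 2 / N)) :=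
        mul_le_mul_of_nonneg_right (sum_minRatio_div_le n I) (Finset.sum_nonneg fun N _ => hterm N)
    _ = _ := by rw [← Finset.mul_sum]; ring

lemma norm_sum_smul_sq_mul_le (hlam : ∀ n, 0 < lam n) (hmod : IsModerate lam C q)
    (hI : ∀ N ∈ I, 1 ≤ N) {n : ℤ}
    (hu : ∀ N ∈ I, ‖u N n‖ ≤ K * (minRatio n.natAbs N ^ (q + 2) / N)) :
    ‖∑ N ∈ I, (lam N)⁻¹ • u N n‖ ^ 2 * evenExt lam n ≤
      K ^ 2 * (2 * C * ∑ N ∈ I, (lam N)⁻¹ * (minRatio n.natAbs N ^ 2 / N)) := by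
  have h : ‖∑ N ∈ I, (lam N)⁻¹ • u N n‖ ≤
      K * ∑ N ∈ I, (lam N)⁻¹ * (minRatio n.natAbs N ^ (q + 2) / N) := by
    rw [Finset.mul_sum]
    refine norm_sum_le_of_le I fun N hN => ?_
    rw [norm_smul, Real.norm_of_nonneg (inv_pos.2 (hlam N)).le, mul_left_comm]
    exact mul_le_mul_of_nonneg_left (hu N hN) (inv_pos.2 (hlam N)).le
  calc ‖∑ N ∈ I, (lam N)⁻¹ • u N n‖ ^ 2 * evenExt lam n
      ≤ (K * ∑ N ∈ I, (lam N)⁻¹ * (minRatio n.natAbs N ^ (q + 2) / N)) ^ 2 * lam n.natAbs :=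
        mul_le_mul_of_nonneg_right (pow_le_pow_left₀ (norm_nonneg _) h 2) (hlam _).le
    _ ≤ _ := by
        rw [mul_pow, mul_assoc]
        exact mul_le_mul_of_nonneg_left (sq_sum_inv_mul_minRatio_pow_le hlam hmod hI _)
          (sq_nonneg K)

lemma sum_norm_sum_smul_sq_mul_le (hlam : ∀ n, 0 < lam n) (hmod : IsModerate lam C q)
    (hI : ∀ N ∈ I, 1 ≤ N)
    (hu : ∀ N ∈ I, ∀ n : ℤ, ‖u N n‖ ≤ K * (minRatio n.natAbs N ^ (q + 2) / N)) (F : Finset ℤ) :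
    ∑ n ∈ F, ‖∑ N ∈ I, (lam N)⁻¹ • u N n‖ ^ 2 * evenExt lam n ≤
      8 * K ^ 2 * C * ∑ N ∈ I, (lam N)⁻¹ := by
  have hC : 0 ≤ C := hmod.const_nonneg hlam
  have hinner (N : ℕ) (hN : N ∈ I) :
      ∑ n ∈ F, (lam N)⁻¹ * (minRatio n.natAbs N ^ 2 / N) ≤ 4 * (lam N)⁻¹ := by
    rw [← Finset.mul_sum, ← Finset.sum_div, mul_comm]
    refine mul_le_mul_of_nonneg_right ?_ (inv_pos.2 (hlam N)).le
    rw [div_le_iff₀ (by exact_mod_cast hI N hN)]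
    exact sum_minRatio_natAbs_sq_le N F
  calc ∑ n ∈ F, ‖∑ N ∈ I, (lam N)⁻¹ • u N n‖ ^ 2 * evenExt lam n
      ≤ ∑ n ∈ F, K ^ 2 * (2 * C * ∑ N ∈ I, (lam N)⁻¹ * (minRatio n.natAbs N ^ 2 / N)) :=
        Finset.sum_le_sum fun n _ => norm_sum_smul_sq_mul_le hlam hmod hI fun N hN => hu N hN n
    _ = K ^ 2 * (2 * C * ∑ N ∈ I, ∑ n ∈ F, (lam N)⁻¹ * (minRatio n.natAbs N ^ 2 / N)) := by
        rw [← Finset.mul_sum, ← Finset.mul_sum, Finset.sum_comm]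
    _ ≤ K ^ 2 * (2 * C * ∑ N ∈ I, 4 * (lam N)⁻¹) := by
        gcongr with N hN
        exact hinner N hN
    _ = 8 * K ^ 2 * C * ∑ N ∈ I, (lam N)⁻¹ := by rw [← Finset.mul_sum]; ring

end QuasiOrthogonality

section MomentBumps

/-- A smooth bump on the line that equals `1` near the origin, takes values in `[-ε, 1]`, and whose
moments of order less than `p` all vanish. -/
structure IsMomentBump (p : ℕ) (ε : ℝ) (β : ℝ → ℝ) : Prop where
  contDiff : ContDiff ℝ ∞ β
  hasCompactSupport : HasCompactSupport β
  eventuallyEq_one : β =ᶠ[𝓝 0] 1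
  mem_Icc : ∀ x, β x ∈ Set.Icc (-ε) 1
  integral_pow_mul_eq_zero : ∀ k < p, ∫ x, x ^ k * β x = 0

variable {β : ℝ → ℝ} {p : ℕ} {ε ε' : ℝ}

lemma isMomentBump_zero_contDiffBump (φ : ContDiffBump (0 : ℝ)) (hε : 0 ≤ ε) :
    IsMomentBump 0 ε φ where
  contDiff := φ.contDiff
  hasCompactSupport := φ.hasCompactSupport
  eventuallyEq_one := φ.eventuallyEq_one
  mem_Icc _ := ⟨(neg_nonpos.2 hε).trans φ.nonneg, φ.le_one⟩
  integral_pow_mul_eq_zero k hk := (k.not_lt_zero hk).elim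

lemma IsMomentBump.eventually_apply_div_eq_one (h : IsMomentBump p ε β) :
    ∀ᶠ R : ℝ in atTop, ∀ x, β x ≠ 0 → β (x / R) = 1 := by
  obtain ⟨L, hL, hzero⟩ := h.hasCompactSupport.exists_pos_le_norm
  obtain ⟨r, hr, hone⟩ := Metric.eventually_nhds_iff.1 h.eventuallyEq_one
  filter_upwards [eventually_gt_atTop (L / r), eventually_gt_atTop 0] with R hR hR0 x hx
  refine hone ?_
  rw [Real.dist_0_eq_abs, abs_div, abs_of_pos hR0, div_lt_comm₀ hR0 hr]
  exact (div_lt_div_of_pos_right (not_le.1 (mt (hzero x) hx)) hr).trans hR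

lemma IsMomentBump.integrable_pow_mul (h : IsMomentBump p ε β) (k : ℕ) :
    Integrable fun x => x ^ k * β x :=
  ((continuous_pow k).mul h.contDiff.continuous).integrable_of_hasCompactSupport
    h.hasCompactSupport.mul_left

lemma integral_pow_mul_comp_div (k : ℕ) {R : ℝ} (hR : 0 < R) :
    ∫ x, x ^ k * β (x / R) = R ^ (k + 1) * ∫ x, x ^ k * β x := by
  have h := Measure.integral_comp_div (fun x => (R * x) ^ k * β x) R
  simp only [mul_div_cancel₀ _ hR.ne', mul_pow, mul_assoc, integral_const_mul, abs_of_pos hR,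
    smul_eq_mul] at h
  rw [h, pow_succ]
  ring

lemma IsMomentBump.integral_pow_mul_sub_dilate (h : IsMomentBump p ε β) (k : ℕ) (s : ℝ) {R : ℝ}
    (hR : 0 < R) :
    ∫ x, x ^ k * ((1 - s)⁻¹ * (β x - s * β (x / R))) =
      (1 - s)⁻¹ * ((1 - s * R ^ (k + 1)) * ∫ x, x ^ k * β x) := by
  have hint : Integrable fun x => x ^ k * β (x / R) := by
    have h' := ((h.integrable_pow_mul k).comp_div hR.ne').const_mul (R ^ k)
    refine h'.congr (.of_forall fun x => ?_)
    simp only [div_pow]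
    field_simp
  calc ∫ x, x ^ k * ((1 - s)⁻¹ * (β x - s * β (x / R)))
      = ∫ x, (1 - s)⁻¹ * (x ^ k * β x - s * (x ^ k * β (x / R))) := by
        congr with x
        ring
    _ = (1 - s)⁻¹ * ((∫ x, x ^ k * β x) - s * (R ^ (k + 1) * ∫ x, x ^ k * β x)) := by
        rw [integral_const_mul, integral_sub (h.integrable_pow_mul k) (hint.const_mul s),
          integral_const_mul, integral_pow_mul_comp_div k hR]
    _ = _ := by ring

lemma IsMomentBump.exists_dilation (h : IsMomentBump p ε β) (hε : ε < ε') :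
    ∃ R : ℝ, 1 < R ∧ (∀ x, β x ≠ 0 → β (x / R) = 1) ∧
      (R ^ (p + 1))⁻¹ * (1 + ε) ≤ 1 ∧ (R ^ (p + 1))⁻¹ * (1 + ε') ≤ ε' - ε := by
  have hs : Tendsto (fun R : ℝ => (R ^ (p + 1))⁻¹) atTop (𝓝 0) :=
    tendsto_inv_atTop_zero.comp (tendsto_pow_atTop p.succ_ne_zero)
  have hsmall (c : ℝ) {d : ℝ} (hd : 0 < d) : ∀ᶠ R : ℝ in atTop, (R ^ (p + 1))⁻¹ * c ≤ d :=
    (hs.mul_const c).eventually_le_const (by rwa [zero_mul])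
  exact ((eventually_gt_atTop 1).and (h.eventually_apply_div_eq_one.and
    ((hsmall _ one_pos).and (hsmall _ (sub_pos.2 hε))))).exists

lemma IsMomentBump.sub_dilate (h : IsMomentBump p ε β) {R s : ℝ} (hR : 1 < R)
    (hs : s = (R ^ (p + 1))⁻¹) (hdil : ∀ x, β x ≠ 0 → β (x / R) = 1)
    (hupp : s * (1 + ε) ≤ 1) (hlow : s * (1 + ε') ≤ ε' - ε) :
    IsMomentBump (p + 1) ε' fun x => (1 - s)⁻¹ * (β x - s * β (x / R)) := by
  have hR0 : 0 < R := one_pos.trans hR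
  have hs0 : 0 < s := hs ▸ by positivity
  have hs1 : 0 < 1 - s := sub_pos.2 (hs ▸ inv_lt_one_of_one_lt₀ (one_lt_pow₀ hR p.succ_ne_zero))
  have hsupp : HasCompactSupport fun x => β (x / R) :=
    by simpa [div_eq_inv_mul] using h.hasCompactSupport.comp_smul (inv_ne_zero hR0.ne')
  refine ⟨?_, ?_, ?_, fun x => ⟨?_, ?_⟩, fun k hk => ?_⟩
  · have := h.contDiff
    fun_prop
  · exact (h.hasCompactSupport.sub hsupp.mul_left).mul_left
  · have hdiv : Tendsto (fun x : ℝ => x / R) (𝓝 0) (𝓝 0) := by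
      simpa using (continuous_id.div_const R).tendsto 0
    filter_upwards [h.eventuallyEq_one, hdiv.eventually h.eventuallyEq_one] with x hx hx'
    simp only [Pi.one_apply] at hx hx' ⊢
    rw [hx, hx', mul_one, inv_mul_cancel₀ hs1.ne']
  · rw [le_inv_mul_iff₀ hs1]
    nlinarith [(h.mem_Icc x).1, (h.mem_Icc (x / R)).2]
  · rw [inv_mul_le_iff₀ hs1]
    by_cases hx : β x = 0
    · nlinarith [(h.mem_Icc (x / R)).1]
    · rw [hdil x hx]
      linarith [(h.mem_Icc x).2]
  · rw [h.integral_pow_mul_sub_dilate k s hR0]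
    rcases Nat.lt_succ_iff_lt_or_eq.1 hk with hk | rfl
    · simp [h.integral_pow_mul_eq_zero k hk]
    · simp [hs, hR0.ne']

lemma exists_isMomentBump (p : ℕ) (hε : 0 < ε) : ∃ β, IsMomentBump p ε β := by
  induction p generalizing ε with
  | zero => exact ⟨_, isMomentBump_zero_contDiffBump ⟨1, 2, one_pos, one_lt_two⟩ hε.le⟩
  | succ p ih =>
    obtain ⟨β, h⟩ := ih (half_pos hε)
    obtain ⟨R, hR, hdil, hupp, hlow⟩ := h.exists_dilation (half_lt_self hε)
    exact ⟨_, h.sub_dilate hR rfl hdil hupp hlow⟩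

end MomentBumps

section FourierTransform

variable {β : ℝ → ℝ} {p : ℕ} {ε : ℝ}

/-- The Fourier transform of a real-valued function on the line. -/
def realFourier (β : ℝ → ℝ) : ℝ → ℂ := 𝓕 fun x => (β x : ℂ)

lemma realFourier_eq_integral (β : ℝ → ℝ) (ξ : ℝ) :
    realFourier β ξ = ∫ x : ℝ, Complex.exp (-2 * Real.pi * Complex.I * ξ * x) * β x := by
  rw [realFourier, Real.fourier_eq']
  congr with x
  simp only [smul_eq_mul, RCLike.inner_apply, conj_trivial]
  push_cast
  ring_nf

lemma norm_realFourier_le (β : ℝ → ℝ) (ξ : ℝ) : ‖realFourier β ξ‖ ≤ ∫ x, |β x| := by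
  refine (VectorFourier.norm_fourierIntegral_le_integral_norm _ _ _ _ ξ).trans_eq ?_
  simp

lemma exists_schwartzMap_fourier_eq (hβ : ContDiff ℝ ∞ β) (hc : HasCompactSupport β) :
    ∃ g : SchwartzMap ℝ ℂ, realFourier β = g := by
  have hc' : HasCompactSupport fun x => (β x : ℂ) := hc.comp_left (g := Complex.ofReal) rfl
  refine ⟨𝓕 (hc'.toSchwartzMap (Complex.ofRealCLM.contDiff.comp hβ)), ?_⟩
  rw [SchwartzMap.fourier_coe]
  rfl

lemma continuous_realFourier (hβ : ContDiff ℝ ∞ β) (hc : HasCompactSupport β) :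
    Continuous (realFourier β) := by
  obtain ⟨g, hg⟩ := exists_schwartzMap_fourier_eq hβ hc
  exact hg ▸ g.continuous

lemma exists_abs_pow_mul_norm_realFourier_le (hβ : ContDiff ℝ ∞ β) (hc : HasCompactSupport β)
    (k : ℕ) : ∃ K, ∀ ξ : ℝ, |ξ| ^ k * ‖realFourier β ξ‖ ≤ K := by
  obtain ⟨g, hg⟩ := exists_schwartzMap_fourier_eq hβ hc
  obtain ⟨K, _, hK⟩ := g.decay k 0
  exact ⟨K, by simpa [hg] using hK⟩

lemma IsMomentBump.integral_exp_taylor_mul_eq_zero (h : IsMomentBump p ε β) (z : ℂ) :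
    ∫ x : ℝ, (∑ k ∈ Finset.range p, (z * x) ^ k / k.factorial) * β x = 0 := by
  have hterm (k : ℕ) (x : ℝ) : (z * x) ^ k / k.factorial * β x =
      z ^ k / k.factorial * ((x ^ k * β x : ℝ) : ℂ) := by
    push_cast
    ring
  simp only [Finset.sum_mul, hterm]
  rw [integral_finsetSum _ fun k _ => (h.integrable_pow_mul k).ofReal.const_mul _]
  refine Finset.sum_eq_zero fun k hk => ?_
  rw [integral_const_mul, integral_complex_ofReal,
    h.integral_pow_mul_eq_zero k (Finset.mem_range.1 hk), Complex.ofReal_zero, mul_zero]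

lemma IsMomentBump.realFourier_eq_integral_exp_sub_taylor (h : IsMomentBump p ε β) (ξ : ℝ) {z : ℂ}
    (hz : z = -2 * Real.pi * Complex.I * ξ) :
    realFourier β ξ = ∫ x : ℝ,
      (Complex.exp (z * x) - ∑ k ∈ Finset.range p, (z * x) ^ k / k.factorial) * β x := by
  have hint (e : ℝ → ℂ) (he : Continuous e) : Integrable fun x => e x * β x :=
    (he.mul (Complex.continuous_ofReal.comp h.contDiff.continuous)).integrable_of_hasCompactSupport
      (h.hasCompactSupport.comp_left (g := Complex.ofReal) rfl).mul_left
  simp only [sub_mul]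
  rw [integral_sub (hint _ (by fun_prop)) (hint _ (by fun_prop)),
    h.integral_exp_taylor_mul_eq_zero, sub_zero, realFourier_eq_integral, hz]

lemma IsMomentBump.exists_norm_realFourier_le_of_abs_le_one (h : IsMomentBump p ε β) :
    ∃ K, ∀ ξ : ℝ, |ξ| ≤ 1 → ‖realFourier β ξ‖ ≤ K * |ξ| ^ p := by
  obtain ⟨L, hL, hzero⟩ := h.hasCompactSupport.exists_pos_le_norm
  have hβ : Integrable β :=
    h.contDiff.continuous.integrable_of_hasCompactSupport h.hasCompactSupport
  refine ⟨(2 * Real.pi * L) ^ p * Real.exp (2 * Real.pi * L) * ∫ x, |β x|, fun ξ hξ => ?_⟩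
  set z : ℂ := -2 * Real.pi * Complex.I * ξ
  have hz : ‖z‖ = 2 * Real.pi * |ξ| := by simp [z, abs_of_pos Real.pi_pos]
  have hpoint (x : ℝ) :
      ‖(Complex.exp (z * x) - ∑ k ∈ Finset.range p, (z * x) ^ k / k.factorial) * β x‖ ≤
        (2 * Real.pi * L) ^ p * Real.exp (2 * Real.pi * L) * |ξ| ^ p * |β x| := by
    rcases le_total L |x| with hx | hx
    · simp [hzero x hx]
    rw [norm_mul, Complex.norm_real, Real.norm_eq_abs]
    gcongr
    refine (Complex.norm_exp_sub_sum_le_norm_mul_exp (z * x) p).trans ?_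
    have hzx : ‖z * x‖ ≤ 2 * Real.pi * L * |ξ| := by
      rw [norm_mul, hz, Complex.norm_real, Real.norm_eq_abs, mul_right_comm _ L]
      gcongr
    have hzx' : ‖z * x‖ ≤ 2 * Real.pi * L := hzx.trans (mul_le_of_le_one_right (by positivity) hξ)
    calc ‖z * x‖ ^ p * Real.exp ‖z * x‖
        ≤ (2 * Real.pi * L * |ξ|) ^ p * Real.exp (2 * Real.pi * L) := by gcongr
      _ = _ := by rw [mul_pow]; ring
  rw [h.realFourier_eq_integral_exp_sub_taylor ξ rfl]
  refine (norm_integral_le_of_norm_le (hβ.abs.const_mul _) (.of_forall hpoint)).trans_eq ?_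
  rw [integral_const_mul]
  ring

lemma IsMomentBump.exists_norm_realFourier_le (h : IsMomentBump p ε β) :
    ∃ K, ∀ ξ : ℝ, ‖realFourier β ξ‖ ≤ K * min |ξ| |ξ|⁻¹ ^ p := by
  obtain ⟨K₀, hK₀⟩ := h.exists_norm_realFourier_le_of_abs_le_one
  obtain ⟨K₁, hK₁⟩ := exists_abs_pow_mul_norm_realFourier_le h.contDiff h.hasCompactSupport p
  refine ⟨max K₀ K₁, fun ξ => ?_⟩
  rcases le_total |ξ| 1 with hξ | hξ
  · have hmin : min |ξ| |ξ|⁻¹ = |ξ| := by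
      rcases (abs_nonneg ξ).eq_or_lt with h0 | h0
      · simp [← h0]
      · exact min_eq_left (hξ.trans ((one_le_inv₀ h0).2 hξ))
    rw [hmin]
    exact (hK₀ ξ hξ).trans (by gcongr; exact le_max_left _ _)
  · have h0 : 0 < |ξ| := one_pos.trans_le hξ
    rw [min_eq_right ((inv_le_one_of_one_le₀ hξ).trans hξ), inv_pow, ← div_eq_mul_inv,
      le_div_iff₀' (by positivity)]
    exact (hK₁ ξ).trans (le_max_right _ _)

end FourierTransform

section FourierCoefficients

instance : IsProbabilityMeasure hm := inferInstanceAs (IsProbabilityMeasure AddCircle.haarAddCircle)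

instance : hm.IsAddHaarMeasure := inferInstanceAs (AddCircle.haarAddCircle).IsAddHaarMeasure

variable {f g : UnitAddCircle → ℝ}

lemma fc_eq_integral (f : UnitAddCircle → ℝ) (n : ℤ) :
    fc f n = ∫ x, fourier (-n) x * (f x : ℂ) ∂hm := rfl

lemma integrable_hm_of_continuous {E : Type*} [NormedAddCommGroup E] {f : UnitAddCircle → E}
    (hf : Continuous f) : Integrable f hm :=
  hf.integrable_of_hasCompactSupport (.of_compactSpace f)

lemma norm_fourier_apply (n : ℤ) (x : UnitAddCircle) : ‖(fourier n x : ℂ)‖ = 1 := by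
  rw [fourier_apply, Circle.norm_coe]

lemma integrable_fourier_mul (hf : Integrable f hm) (n : ℤ) :
    Integrable (fun x => fourier n x * (f x : ℂ)) hm :=
  hf.ofReal.bdd_mul (c := 1) (map_continuous _).aestronglyMeasurable
    (.of_forall fun x => (norm_fourier_apply n x).le)

lemma fc_add (hf : Integrable f hm) (hg : Integrable g hm) : fc (f + g) = fc f + fc g := by
  funext n
  rw [Pi.add_apply, fc, fc, fc, ← Pi.add_apply, ← fourierCoeff.add hf.ofReal hg.ofReal]
  congr with x
  simp

lemma fc_const_smul (c : ℝ) (f : UnitAddCircle → ℝ) : fc (c • f) = c • fc f := by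
  funext n
  simp only [fc, Pi.smul_apply, smul_eq_mul, Complex.ofReal_mul, fourierCoeff.const_mul,
    Complex.real_smul]

lemma fc_sum {ι : Type*} (I : Finset ι) {F : ι → UnitAddCircle → ℝ}
    (hF : ∀ i ∈ I, Integrable (F i) hm) : fc (∑ i ∈ I, F i) = ∑ i ∈ I, fc (F i) := by
  have hcoe : (fun x => ((∑ i ∈ I, F i) x : ℂ)) = ∑ i ∈ I, fun x => (F i x : ℂ) := by
    ext x
    simp
  funext n
  rw [fc, hcoe, fourierCoeff.sum I _ fun i hi => (hF i hi).ofReal, Finset.sum_apply,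
    Finset.sum_apply]
  rfl

lemma fc_comp_sub_right (f : UnitAddCircle → ℝ) (a : UnitAddCircle) (n : ℤ) :
    fc (fun x => f (x - a)) n = fourier (-n) a * fc f n := by
  rw [fc_eq_integral, fc_eq_integral, ← integral_const_mul, ← integral_add_right_eq_self _ a]
  congr with x
  rw [add_sub_cancel_right, fourier_apply, fourier_apply, fourier_apply, smul_add,
    AddCircle.toCircle_add, Circle.coe_mul]
  ring

lemma norm_fc_comp_sub_right (f : UnitAddCircle → ℝ) (a : UnitAddCircle) (n : ℤ) :
    ‖fc (fun x => f (x - a)) n‖ = ‖fc f n‖ := by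
  rw [fc_comp_sub_right, norm_mul, norm_fourier_apply, one_mul]

end FourierCoefficients

section Periodization

variable {β : ℝ → ℝ} {N : ℝ}

/-- The function on the circle that equals `β (N * t)` at the point represented by
`t ∈ [-1/2, 1/2)`. It is the periodization of `β (N * ·)` when `β` is supported in
`[-N/2, N/2]`. -/
def periodize (β : ℝ → ℝ) (N : ℝ) : UnitAddCircle → ℝ :=
  AddCircle.liftIco 1 (-(1 / 2)) fun x => β (N * x)

lemma exists_coe_eq_and_norm_eq (x : UnitAddCircle) :
    ∃ t ∈ Set.Ico (-(1 / 2) : ℝ) (-(1 / 2) + 1), (t : UnitAddCircle) = x ∧ ‖x‖ = |t| := by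
  have hx : x ∈ ((↑) : ℝ → UnitAddCircle) '' Set.Ico (-(1 / 2) : ℝ) (-(1 / 2) + 1) := by
    rw [AddCircle.coe_image_Ico_eq]
    trivial
  obtain ⟨t, ht, rfl⟩ := hx
  refine ⟨t, ht, rfl, (AddCircle.norm_coe_eq_abs_iff 1 one_ne_zero).2 ?_⟩
  rw [abs_one, abs_le]
  exact ⟨ht.1, by linarith [ht.2]⟩

lemma exists_periodize_eq (β : ℝ → ℝ) (N : ℝ) (x : UnitAddCircle) :
    ∃ t : ℝ, |t| = ‖x‖ ∧ periodize β N x = β (N * t) := by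
  obtain ⟨t, ht, rfl, hnorm⟩ := exists_coe_eq_and_norm_eq x
  exact ⟨t, hnorm.symm, AddCircle.liftIco_coe_apply ht⟩

lemma apply_mul_eq_zero_of_half_le (hN : 0 < N) (hβ : ∀ x, N / 2 ≤ |x| → β x = 0) {x : ℝ}
    (hx : 1 / 2 ≤ |x|) : β (N * x) = 0 := by
  refine hβ _ ?_
  rw [abs_mul, abs_of_pos hN]
  nlinarith

lemma continuous_periodize (hβc : Continuous β) (hN : 0 < N)
    (hβ : ∀ x, N / 2 ≤ |x| → β x = 0) : Continuous (periodize β N) := by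
  refine AddCircle.liftIco_continuous ?_ (by fun_prop)
  rw [apply_mul_eq_zero_of_half_le hN hβ, apply_mul_eq_zero_of_half_le hN hβ] <;> norm_num

lemma fc_periodize (hN : 0 < N) (hβ : ∀ x, N / 2 ≤ |x| → β x = 0) (n : ℤ) :
    fc (periodize β N) n = N⁻¹ * realFourier β (n / N) := by
  set ξ : ℝ := n / N
  let e : ℝ → ℂ := fun y => Complex.exp (-2 * Real.pi * Complex.I * ξ * y) * β y
  have hintegrand : ∀ x ∈ Set.Ioo (-(1 / 2) : ℝ) (-(1 / 2) + 1),
      fourier (-n) (x : UnitAddCircle) • (periodize β N x : ℂ) = e (N * x) := fun x hx => by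
    have hN' : (N : ℂ) ≠ 0 := by exact_mod_cast hN.ne'
    rw [periodize, AddCircle.liftIco_coe_apply (Set.Ioo_subset_Ico_self hx), fourier_coe_apply,
      smul_eq_mul]
    simp only [e, ξ]
    congr 2
    push_cast
    field_simp
  calc fc (periodize β N) n
      = ∫ x in (-(1 / 2) : ℝ)..(-(1 / 2) + 1),
          fourier (-n) (x : UnitAddCircle) • (periodize β N x : ℂ) := by
        rw [fc, fourierCoeff_eq_intervalIntegral _ n (-(1 / 2)), div_one, one_smul]
    _ = ∫ x in (-(1 / 2) : ℝ)..(-(1 / 2) + 1), e (N * x) :=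
        intervalIntegral.integral_congr_Ioo_of_le (by norm_num) hintegrand
    _ = ∫ x, e (N * x) := by
        rw [intervalIntegral.integral_of_le (by norm_num)]
        refine setIntegral_eq_integral_of_forall_compl_eq_zero fun x hx => ?_
        have hx' : 1 / 2 ≤ |x| := by
          by_contra! h
          exact hx ⟨by linarith [(abs_lt.1 h).1], by linarith [(abs_lt.1 h).2]⟩
        simp only [e, apply_mul_eq_zero_of_half_le hN hβ hx', Complex.ofReal_zero, mul_zero]
    _ = N⁻¹ * realFourier β ξ := by
        rw [Measure.integral_comp_mul_left e N, abs_of_pos (inv_pos.2 hN), realFourier_eq_integral,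
          Complex.real_smul, Complex.ofReal_inv]

end Periodization

section PeakFunctions

variable {lam : ℕ → ℝ} {β : ℝ → ℝ} {C K ε : ℝ} {p q : ℕ} {I : Finset ℕ}

lemma IsMomentBump.exists_norm_fc_periodize_le (h : IsMomentBump p ε β) :
    ∃ K, ∀ N : ℕ, 1 ≤ N → (∀ x, (N : ℝ) / 2 ≤ |x| → β x = 0) → ∀ n : ℤ,
      ‖fc (periodize β N) n‖ ≤ K * (minRatio n.natAbs N ^ p / N) := by
  obtain ⟨K, hK⟩ := h.exists_norm_realFourier_le
  refine ⟨K, fun N hN hβ n => ?_⟩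
  have hratio : min |(n : ℝ) / N| |(n : ℝ) / N|⁻¹ = minRatio n.natAbs N := by
    rw [minRatio, Nat.cast_natAbs, Int.cast_abs, abs_div, Nat.abs_cast, inv_div]
  rw [fc_periodize (by exact_mod_cast hN) hβ, norm_mul, Complex.norm_real, norm_inv,
    Real.norm_natCast, ← hratio, ← mul_div_assoc, inv_mul_eq_div]
  gcongr
  exact hK _

lemma periodize_eventuallyEq_one (hβ : β =ᶠ[𝓝 0] 1) (N : ℝ) : periodize β N =ᶠ[𝓝 0] 1 := by
  obtain ⟨r, hr, hone⟩ := Metric.eventually_nhds_iff.1 hβ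
  have hsmall : ∀ᶠ x : UnitAddCircle in 𝓝 0, |N| * ‖x‖ < r := by
    have hcont : Continuous fun x : UnitAddCircle => |N| * ‖x‖ := by fun_prop
    exact (hcont.tendsto 0).eventually_lt_const (by simpa using hr)
  filter_upwards [hsmall] with x hx
  obtain ⟨t, ht, hper⟩ := exists_periodize_eq β N x
  rw [hper]
  exact hone (by rwa [dist_zero_right, Real.norm_eq_abs, abs_mul, ht])

/-- The average over `N ∈ I`, with weights `1 / λ_N`, of the dilates of a bump `β` to scale
`1 / N`. -/
def bumpAverage (lam : ℕ → ℝ) (β : ℝ → ℝ) (I : Finset ℕ) : UnitAddCircle → ℝ :=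
  I.centerMass (fun N => (lam N)⁻¹) fun N => periodize β N

lemma bumpAverage_apply (lam : ℕ → ℝ) (β : ℝ → ℝ) (I : Finset ℕ) (x : UnitAddCircle) :
    bumpAverage lam β I x = I.centerMass (fun N => (lam N)⁻¹) fun N => periodize β N x := by
  simp [bumpAverage, Finset.centerMass]

lemma continuous_bumpAverage (hβ : ∀ N ∈ I, Continuous (periodize β N)) :
    Continuous (bumpAverage lam β I) := by
  rw [bumpAverage, Finset.centerMass, Finset.sum_fn]
  exact (continuous_finsetSum I fun N hN => (hβ N hN).const_smul (lam N)⁻¹).const_smul _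

lemma bumpAverage_apply_mem (hlam : ∀ n, 0 < lam n) (hI : I.Nonempty) {s : Set ℝ}
    (hs : Convex ℝ s) {x : UnitAddCircle} (hx : ∀ N ∈ I, periodize β N x ∈ s) :
    bumpAverage lam β I x ∈ s :=
  bumpAverage_apply lam β I x ▸ hs.centerMass_mem (fun N _ => (inv_pos.2 (hlam N)).le)
    (Finset.sum_pos (fun N _ => inv_pos.2 (hlam N)) hI) hx

lemma bumpAverage_eventuallyEq_one (hlam : ∀ n, 0 < lam n) (hI : I.Nonempty)
    (hβ : β =ᶠ[𝓝 0] 1) : bumpAverage lam β I =ᶠ[𝓝 0] 1 := by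
  have hall := (Finset.eventually_all I).2 fun N (_ : N ∈ I) =>
    periodize_eventuallyEq_one hβ (N : ℝ)
  filter_upwards [hall] with x hx
  exact bumpAverage_apply_mem hlam hI (convex_singleton 1) hx

lemma fc_bumpAverage (hβ : ∀ N ∈ I, Continuous (periodize β N)) :
    fc (bumpAverage lam β I) =
      (∑ N ∈ I, (lam N)⁻¹)⁻¹ • fun n => ∑ N ∈ I, (lam N)⁻¹ • fc (periodize β N) n := by
  rw [bumpAverage, Finset.centerMass, fc_const_smul,
    fc_sum I fun N hN => integrable_hm_of_continuous ((hβ N hN).const_smul _)]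
  simp only [fc_const_smul]
  congr with n
  simp

lemma memWeightedL2_fc_bumpAverage (hlam : ∀ n, 0 < lam n) (hmod : IsModerate lam C q)
    (hI : ∀ N ∈ I, 1 ≤ N) (hβ : ∀ N ∈ I, Continuous (periodize β N))
    (hK : ∀ N ∈ I, ∀ n : ℤ,
      ‖fc (periodize β N) n‖ ≤ K * (minRatio n.natAbs N ^ (q + 2) / N)) :
    MemWeightedL2 (evenExt lam) (fc (bumpAverage lam β I)) := by
  rw [fc_bumpAverage hβ]
  exact (memWeightedL2_of_sum_le (fun n => (hlam _).le)
    (sum_norm_sum_smul_sq_mul_le hlam hmod hI hK)).const_smul _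

lemma sq_weightedNorm_fc_bumpAverage_le (hlam : ∀ n, 0 < lam n) (hmod : IsModerate lam C q)
    (hI : ∀ N ∈ I, 1 ≤ N) (hβ : ∀ N ∈ I, Continuous (periodize β N))
    (hK : ∀ N ∈ I, ∀ n : ℤ,
      ‖fc (periodize β N) n‖ ≤ K * (minRatio n.natAbs N ^ (q + 2) / N)) :
    weightedNorm (evenExt lam) (fc (bumpAverage lam β I)) ^ 2 ≤
      8 * K ^ 2 * C * (∑ N ∈ I, (lam N)⁻¹)⁻¹ := by
  set S := ∑ N ∈ I, (lam N)⁻¹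
  have h := sq_weightedNorm_le_of_sum_le (w := evenExt lam) (fun n => (hlam _).le)
    (sum_norm_sum_smul_sq_mul_le hlam hmod hI hK)
  rw [fc_bumpAverage hβ, weightedNorm_const_smul, mul_pow, Real.norm_eq_abs, sq_abs]
  calc S⁻¹ ^ 2 * _ ≤ S⁻¹ ^ 2 * (8 * K ^ 2 * C * S) := by gcongr
    _ = 8 * K ^ 2 * C * S⁻¹ := by
      rcases eq_or_ne S 0 with hS | hS
      · simp [hS]
      · field_simp

lemma tendsto_sum_Ico_inv_atTop (hlam : ∀ n, 0 < lam n)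
    (hdiv : ¬ Summable fun n : ℕ => 1 / lam (n + 1)) (N₀ : ℕ) :
    Tendsto (fun M => ∑ N ∈ Finset.Ico N₀ M, (lam N)⁻¹) atTop atTop := by
  have hdiv' : ¬ Summable fun N => (lam N)⁻¹ := by
    rwa [← summable_nat_add_iff 1, ← funext fun n => one_div (lam (n + 1))]
  have htop := (not_summable_iff_tendsto_nat_atTop_of_nonneg
    fun N => (inv_pos.2 (hlam N)).le).1 hdiv'
  refine (tendsto_atTop_add_const_right _ (-∑ N ∈ Finset.range N₀, (lam N)⁻¹) htop).congr' ?_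
  filter_upwards [eventually_ge_atTop N₀] with M hM
  rw [Finset.sum_Ico_eq_sub _ hM, sub_eq_add_neg]

lemma exists_peak_at_zero (hlam : ∀ n, 0 < lam n) (hmod : IsModerate lam C q)
    (hdiv : ¬ Summable fun n : ℕ => 1 / lam (n + 1)) (hε : 0 < ε) {τ : ℝ} (hτ : 0 < τ) :
    ∃ φ : UnitAddCircle → ℝ, Continuous φ ∧ (∀ x, φ x ∈ Set.Icc (-ε) 1) ∧ φ =ᶠ[𝓝 0] 1 ∧
      MemWeightedL2 (evenExt lam) (fc φ) ∧ weightedNorm (evenExt lam) (fc φ) < τ := by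
  obtain ⟨β, h⟩ := exists_isMomentBump (q + 2) hε
  obtain ⟨L, hL, hzero⟩ := h.hasCompactSupport.exists_pos_le_norm
  obtain ⟨K, hK⟩ := h.exists_norm_fc_periodize_le
  obtain ⟨N₀, hN₀⟩ := exists_nat_ge (2 * L)
  have hsmall : ∀ᶠ M in atTop,
      8 * K ^ 2 * C * (∑ N ∈ Finset.Ico (N₀ + 1) M, (lam N)⁻¹)⁻¹ < τ ^ 2 :=
    ((tendsto_sum_Ico_inv_atTop hlam hdiv (N₀ + 1)).inv_tendsto_atTop.const_mul _)
      |>.eventually_lt_const (by simpa using pow_pos hτ 2)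
  obtain ⟨M, hM, hMτ⟩ := ((eventually_gt_atTop (N₀ + 1)).and hsmall).exists
  set I := Finset.Ico (N₀ + 1) M
  have hI : I.Nonempty := Finset.nonempty_Ico.2 hM
  have hpos (N : ℕ) (hN : N ∈ I) : 1 ≤ N := (Nat.le_add_left 1 N₀).trans (Finset.mem_Ico.1 hN).1
  have hsupp (N : ℕ) (hN : N ∈ I) (x : ℝ) (hx : (N : ℝ) / 2 ≤ |x|) : β x = 0 := by
    have hN' : (N₀ : ℝ) + 1 ≤ N := by exact_mod_cast (Finset.mem_Ico.1 hN).1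
    exact hzero x (show L ≤ |x| by linarith)
  have hcont (N : ℕ) (hN : N ∈ I) : Continuous (periodize β N) :=
    continuous_periodize h.contDiff.continuous (by exact_mod_cast hpos N hN) (hsupp N hN)
  have hfc (N : ℕ) (hN : N ∈ I) := hK N (hpos N hN) (hsupp N hN)
  refine ⟨bumpAverage lam β I, continuous_bumpAverage hcont, fun x => ?_,
    bumpAverage_eventuallyEq_one hlam hI h.eventuallyEq_one,
    memWeightedL2_fc_bumpAverage hlam hmod hpos hcont hfc, ?_⟩
  · refine bumpAverage_apply_mem hlam hI (convex_Icc _ _) fun N _ => ?_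
    obtain ⟨t, _, ht⟩ := exists_periodize_eq β N x
    exact ht ▸ h.mem_Icc _
  · exact lt_of_pow_lt_pow_left₀ 2 hτ.le
      ((sq_weightedNorm_fc_bumpAverage_le hlam hmod hpos hcont hfc).trans_lt hMτ)

lemma exists_peak (hlam : ∀ n, 0 < lam n) (hmod : IsModerate lam C q)
    (hdiv : ¬ Summable fun n : ℕ => 1 / lam (n + 1)) (a : UnitAddCircle) (hε : 0 < ε)
    {τ : ℝ} (hτ : 0 < τ) :
    ∃ φ : UnitAddCircle → ℝ, Continuous φ ∧ (∀ x, φ x ∈ Set.Icc (-ε) 1) ∧ φ =ᶠ[𝓝 a] 1 ∧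
      MemWeightedL2 (evenExt lam) (fc φ) ∧ weightedNorm (evenExt lam) (fc φ) < τ := by
  obtain ⟨φ, hcont, hmem, hone, hL2, hτφ⟩ := exists_peak_at_zero hlam hmod hdiv hε hτ
  refine ⟨fun x => φ (x - a), by fun_prop, fun x => hmem _, ?_, ?_, ?_⟩
  · have hsub : Tendsto (fun x => x - a) (𝓝 a) (𝓝 0) := by
      simpa using (continuous_sub_right a).tendsto a
    exact hsub.eventually hone
  · simpa only [MemWeightedL2, norm_fc_comp_sub_right] using hL2
  · simpa only [weightedNorm, norm_fc_comp_sub_right] using hτφ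

end PeakFunctions

section Multipliers

variable {f φ : UnitAddCircle → ℝ} {w ν : ℤ → ℝ}

lemma hasSum_fc_mul (hf : Continuous f) (hs : Summable fun k => ‖fc f k‖) (hφ : Integrable φ hm)
    (n : ℤ) : HasSum (fun k => fc f k * fc φ (n - k)) (fc (f * φ) n) := by
  let G : C(UnitAddCircle, ℂ) := ⟨fun x => (f x : ℂ), by fun_prop⟩
  have hpt (x : UnitAddCircle) : HasSum (fun k => fc f k * fourier k x) (f x : ℂ) :=
    has_pointwise_sum_fourier_series_of_summable (f := G) (.of_norm hs) x
  let F (k : ℤ) (x : UnitAddCircle) : ℂ := fc f k * (fourier (-(n - k)) x * φ x)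
  have hF_int (k : ℤ) : Integrable (F k) hm := (integrable_fourier_mul hφ _).const_mul _
  have hF_norm : Summable fun k => ∫ x, ‖F k x‖ ∂hm := by
    simp only [F, norm_mul, norm_fourier_apply, one_mul, integral_const_mul]
    exact hs.mul_right _
  have hF_sum (x : UnitAddCircle) : ∑' k, F k x = fourier (-n) x * ((f * φ) x : ℂ) := by
    have hF (k : ℤ) : F k x = fc f k * fourier k x * (fourier (-n) x * φ x) := by
      rw [mul_assoc, ← mul_assoc (fourier k x : ℂ), ← fourier_add, ← sub_eq_add_neg, ← neg_sub]
    rw [funext hF, ((hpt x).mul_right _).tsum_eq, Pi.mul_apply, Complex.ofReal_mul, mul_left_comm]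
  have h := hasSum_integral_of_summable_integral_norm hF_int hF_norm
  simpa only [hF_sum, F, integral_const_mul, ← fc_eq_integral] using h

lemma weightedNorm_smul_comp_sub_right_le (hw : ∀ m, 0 ≤ w m) (hν : ∀ k, 0 ≤ ν k)
    (hshift : ∀ k m, w (m + k) ≤ ν k ^ 2 * w m) (hφ : MemWeightedL2 w (fc φ)) (k : ℤ) :
    weightedNorm w (fc f k • fun n => fc φ (n - k)) ≤
      ‖fc f k‖ * ν k * weightedNorm w (fc φ) := by
  rw [weightedNorm_const_smul, mul_assoc]
  gcongr
  exact weightedNorm_comp_sub_right_le hw (hν k) (hshift k) hφ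

lemma memWeightedL2_fc_mul (hw : ∀ m, 0 ≤ w m) (hν : ∀ k, 0 ≤ ν k)
    (hshift : ∀ k m, w (m + k) ≤ ν k ^ 2 * w m) (hf : Continuous f)
    (hs : Summable fun k => ‖fc f k‖) (hsν : Summable fun k => ‖fc f k‖ * ν k)
    (hφ : Integrable φ hm) (hφw : MemWeightedL2 w (fc φ)) : MemWeightedL2 w (fc (f * φ)) :=
  memWeightedL2_of_hasSum hw (fun k => (hφw.comp_sub_right hw (hshift k)).const_smul (fc f k))
    (hsν.mul_right _) (weightedNorm_smul_comp_sub_right_le hw hν hshift hφw)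
    (hasSum_fc_mul hf hs hφ)

lemma weightedNorm_fc_mul_le (hw : ∀ m, 0 ≤ w m) (hν : ∀ k, 0 ≤ ν k)
    (hshift : ∀ k m, w (m + k) ≤ ν k ^ 2 * w m) (hf : Continuous f)
    (hs : Summable fun k => ‖fc f k‖) (hsν : Summable fun k => ‖fc f k‖ * ν k)
    (hφ : Integrable φ hm) (hφw : MemWeightedL2 w (fc φ)) :
    weightedNorm w (fc (f * φ)) ≤ (∑' k, ‖fc f k‖ * ν k) * weightedNorm w (fc φ) := by
  rw [← tsum_mul_right]
  exact weightedNorm_le_tsum_of_hasSum hw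
    (fun k => (hφw.comp_sub_right hw (hshift k)).const_smul (fc f k)) (hsν.mul_right _)
    (weightedNorm_smul_comp_sub_right_le hw hν hshift hφw) (hasSum_fc_mul hf hs hφ)

lemma IsModerate.exists_weightedNorm_fc_mul_le {lam : ℕ → ℝ} {C : ℝ} {q : ℕ}
    (hmod : IsModerate lam C q) (hlam : ∀ n, 0 < lam n) (hf : Continuous f)
    (hfq : Summable fun k : ℤ => ‖fc f k‖ * (1 + |(k : ℝ)|) ^ q) :
    ∃ A, ∀ φ, Integrable φ hm → MemWeightedL2 (evenExt lam) (fc φ) →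
      MemWeightedL2 (evenExt lam) (fc (f * φ)) ∧
        weightedNorm (evenExt lam) (fc (f * φ)) ≤ A * weightedNorm (evenExt lam) (fc φ) := by
  have hw (n : ℤ) : 0 ≤ evenExt lam n := (hlam _).le
  obtain ⟨D, hD, hshift⟩ := hmod.exists_evenExt_add_le hlam
  have hν := shiftBound_nonneg hD q
  have hshift' (k m : ℤ) := hshift m k
  have hs : Summable fun k => ‖fc f k‖ := hfq.of_nonneg_of_le (fun _ => norm_nonneg _) fun k =>
    le_mul_of_one_le_right (norm_nonneg _) (one_le_pow₀ (by linarith [abs_nonneg (k : ℝ)]))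
  have hsν : Summable fun k => ‖fc f k‖ * shiftBound D q k := by
    simpa only [shiftBound, mul_left_comm] using hfq.mul_left D
  exact ⟨∑' k, ‖fc f k‖ * shiftBound D q k, fun φ hφ hφw =>
    ⟨memWeightedL2_fc_mul hw hν hshift' hf hs hsν hφ hφw,
      weightedNorm_fc_mul_le hw hν hshift' hf hs hsν hφ hφw⟩⟩

end Multipliers

section SupportOfMeasure

variable {f : UnitAddCircle → ℝ} {E : Set UnitAddCircle}

lemma ae_eq_zero_of_measSupport_subset (hsupp : measSupport f ⊆ E) :
    ∀ᵐ x ∂hm, x ∉ E → f x = 0 := by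
  refine measure_null_of_locally_null _ fun x hx => ?_
  obtain ⟨hxE, -⟩ := Classical.not_imp.1 hx
  obtain ⟨U, ⟨hU, hfU⟩, hxU⟩ := not_not.1 fun h => hxE (hsupp h)
  refine ⟨{y | ¬(y ∈ U → f y = 0)}, ?_, hfU⟩
  filter_upwards [mem_nhdsWithin_of_mem_nhds (hU.mem_nhds hxU), self_mem_nhdsWithin] with y hyU hy
  exact Classical.not_imp.2 ⟨hyU, (Classical.not_imp.1 hy).2⟩

lemma measSupport_subset (hE : IsClosed E) (hf : ∀ x ∉ E, f x = 0) : measSupport f ⊆ E :=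
  Set.compl_subset_comm.2 <| Set.subset_sUnion_of_mem ⟨hE.isOpen_compl, .of_forall hf⟩

end SupportOfMeasure

section Convolution

open ContinuousLinearMap (lsmul)

variable {f ρ : UnitAddCircle → ℝ} {E : Set UnitAddCircle} {M η : ℝ}

lemma norm_fc_le (f : UnitAddCircle → ℝ) (n : ℤ) : ‖fc f n‖ ≤ ∫ x, |f x| ∂hm := by
  refine (norm_integral_le_integral_norm _).trans_eq ?_
  congr with x
  rw [smul_eq_mul, norm_mul, norm_fourier_apply, one_mul, Complex.norm_real, Real.norm_eq_abs]

lemma fc_zero_eq_integral (f : UnitAddCircle → ℝ) : fc f 0 = ∫ x, f x ∂hm := by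
  rw [fc_eq_integral, ← integral_complex_ofReal]
  simp

lemma fc_convolution (hf : Integrable f hm) (hρ : Integrable ρ hm) :
    fc (f ⋆[lsmul ℝ ℝ, hm] ρ) = fc ρ * fc f := by
  funext n
  have hconv (x : UnitAddCircle) :
      fourier (-n) x * ((f ⋆[lsmul ℝ ℝ, hm] ρ) x : ℂ) =
        ((fun x => fourier (-n) x * (f x : ℂ)) ⋆[.mul ℝ ℂ, hm]
          fun x => fourier (-n) x * (ρ x : ℂ)) x := by
    rw [convolution_def, convolution_def, ← integral_complex_ofReal, ← integral_const_mul]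
    congr with t
    have hx : (fourier (-n) x : ℂ) = fourier (-n) t * fourier (-n) (x - t) := by
      rw [fourier_apply, fourier_apply, fourier_apply, ← Circle.coe_mul, ← AddCircle.toCircle_add,
        ← smul_add, add_sub_cancel]
    rw [hx, ContinuousLinearMap.mul_apply', ContinuousLinearMap.lsmul_apply, smul_eq_mul,
      Complex.ofReal_mul]
    ring
  rw [fc_eq_integral, funext hconv, integral_convolution _ (integrable_fourier_mul hf _)
      (integrable_fourier_mul hρ _), ContinuousLinearMap.mul_apply', ← fc_eq_integral,
    ← fc_eq_integral, Pi.mul_apply, mul_comm]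

lemma continuous_convolution (hf : Integrable f hm) (hρ : Continuous ρ) :
    Continuous (f ⋆[lsmul ℝ ℝ, hm] ρ) :=
  HasCompactSupport.continuous_convolution_right _ (.of_compactSpace ρ) hf.locallyIntegrable hρ

lemma convolution_mem_Icc (hf : Integrable f hm) (hfM : ∀ᵐ x ∂hm, 0 ≤ f x ∧ f x ≤ M)
    (hρ : Continuous ρ) (hρ0 : ∀ x, 0 ≤ ρ x) (hρ1 : ∫ x, ρ x ∂hm = 1) (x : UnitAddCircle) :
    (f ⋆[lsmul ℝ ℝ, hm] ρ) x ∈ Set.Icc 0 M := by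
  have hint : Integrable (fun t => f t * ρ (x - t)) hm :=
    (HasCompactSupport.of_compactSpace ρ).convolutionExists_right (lsmul ℝ ℝ)
      hf.locallyIntegrable hρ x
  have hρx : Integrable (fun t => ρ (x - t)) hm := integrable_hm_of_continuous (by fun_prop)
  rw [convolution_lsmul]
  constructor
  · refine integral_nonneg_of_ae ?_
    filter_upwards [hfM] with t ht using mul_nonneg ht.1 (hρ0 _)
  · calc ∫ t, f t * ρ (x - t) ∂hm ≤ ∫ t, M * ρ (x - t) ∂hm := by
          refine integral_mono_ae hint (hρx.const_mul M) ?_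
          filter_upwards [hfM] with t ht using mul_le_mul_of_nonneg_right ht.2 (hρ0 _)
      _ = M := by rw [integral_const_mul, integral_sub_left_eq_self, hρ1, mul_one]

lemma convolution_eq_zero_of_notMem_cthickening (hf : ∀ᵐ x ∂hm, x ∉ E → f x = 0)
    (hρ : ∀ x, η < ‖x‖ → ρ x = 0) {x : UnitAddCircle} (hx : x ∉ Metric.cthickening η E) :
    (f ⋆[lsmul ℝ ℝ, hm] ρ) x = 0 := by
  rw [convolution_lsmul]
  refine integral_eq_zero_of_ae ?_
  filter_upwards [hf] with t ht
  by_cases htE : t ∈ E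
  · have hxt : η < dist x t := by
      by_contra! h
      exact hx (Metric.mem_cthickening_of_dist_le x t η E htE h)
    simp [hρ _ (dist_eq_norm x t ▸ hxt)]
  · simp [ht htE]

end Convolution

section Mollification

open ContinuousLinearMap (lsmul)

lemma tendsto_weightedNorm_sub_mul {ι α : Type*} {l : Filter α} [l.IsCountablyGenerated]
    {w : ι → ℝ} {u : ι → ℂ} {m : α → ι → ℂ} (hw : ∀ i, 0 ≤ w i) (hu : MemWeightedL2 w u)
    (hm_le : ∀ s i, ‖m s i‖ ≤ 1) (hm_lim : ∀ i, Tendsto (fun s => m s i) l (𝓝 1)) :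
    Tendsto (fun s => weightedNorm w (u - m s * u)) l (𝓝 0) := by
  have hterm (i : ι) : Tendsto (fun s => ‖u i - m s i * u i‖ ^ 2 * w i) l (𝓝 0) := by
    simpa using (((((hm_lim i).mul_const (u i)).const_sub (u i)).norm.pow 2).mul_const (w i))
  have hbound (s : α) (i : ι) : ‖‖u i - m s i * u i‖ ^ 2 * w i‖ ≤ 2 ^ 2 * (‖u i‖ ^ 2 * w i) := by
    have hnorm : ‖u i - m s i * u i‖ ≤ 2 * ‖u i‖ := by
      calc ‖u i - m s i * u i‖ ≤ ‖u i‖ + ‖m s i‖ * ‖u i‖ := norm_mul (m s i) _ ▸ norm_sub_le _ _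
        _ ≤ ‖u i‖ + 1 * ‖u i‖ := by gcongr; exact hm_le s i
        _ = 2 * ‖u i‖ := by ring
    rw [Real.norm_of_nonneg (mul_nonneg (sq_nonneg _) (hw i)), ← mul_assoc, ← mul_pow]
    gcongr
    exact hw i
  have hsum := tendsto_tsum_of_dominated_convergence (hu.mul_left (2 ^ 2)) hterm
    (.of_forall hbound)
  simpa [weightedNorm] using hsum.sqrt

/-- A smooth probability density on the line supported in `[-1, 1]`. -/
def lineDensity : ℝ → ℝ :=
  (⟨1 / 2, 1, by norm_num, by norm_num⟩ : ContDiffBump (0 : ℝ)).normed volume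

lemma contDiff_lineDensity : ContDiff ℝ ∞ lineDensity := ContDiffBump.contDiff_normed _

lemma hasCompactSupport_lineDensity : HasCompactSupport lineDensity :=
  ContDiffBump.hasCompactSupport_normed _

lemma lineDensity_nonneg (x : ℝ) : 0 ≤ lineDensity x := ContDiffBump.nonneg_normed _ x

lemma integral_lineDensity : ∫ x, lineDensity x = 1 := ContDiffBump.integral_normed _

lemma lineDensity_eq_zero {x : ℝ} (hx : 1 ≤ |x|) : lineDensity x = 0 := by
  refine Function.notMem_support.1 fun h => ?_
  rw [lineDensity, ContDiffBump.support_normed_eq, mem_ball_zero_iff, Real.norm_eq_abs] at h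
  exact h.not_ge hx

lemma norm_realFourier_lineDensity_le_one (ξ : ℝ) : ‖realFourier lineDensity ξ‖ ≤ 1 := by
  simpa only [abs_of_nonneg (lineDensity_nonneg _), integral_lineDensity] using
    norm_realFourier_le lineDensity ξ

lemma realFourier_lineDensity_zero : realFourier lineDensity 0 = 1 := by
  simp [realFourier_eq_integral, integral_complex_ofReal, integral_lineDensity]

/-- The probability density on the circle obtained by rescaling `lineDensity` to scale `1 / N`. -/
def mollifier (N : ℝ) : UnitAddCircle → ℝ := N • periodize lineDensity N

variable {N η : ℝ}

lemma lineDensity_eq_zero_of_half_le (hN : 2 ≤ N) (x : ℝ) (hx : N / 2 ≤ |x|) :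
    lineDensity x = 0 :=
  lineDensity_eq_zero (by linarith)

lemma continuous_mollifier (hN : 2 ≤ N) : Continuous (mollifier N) :=
  (continuous_periodize contDiff_lineDensity.continuous (zero_lt_two.trans_le hN)
    (lineDensity_eq_zero_of_half_le hN)).const_smul N

lemma mollifier_nonneg (hN : 0 ≤ N) (x : UnitAddCircle) : 0 ≤ mollifier N x := by
  obtain ⟨t, -, ht⟩ := exists_periodize_eq lineDensity N x
  exact mul_nonneg hN (ht ▸ lineDensity_nonneg _)

lemma mollifier_eq_zero (hη : 0 < η) (hN : 1 / η ≤ N) {x : UnitAddCircle} (hx : η < ‖x‖) :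
    mollifier N x = 0 := by
  obtain ⟨t, ht, hper⟩ := exists_periodize_eq lineDensity N x
  rw [mollifier, Pi.smul_apply, hper, lineDensity_eq_zero, smul_zero]
  rw [div_le_iff₀ hη] at hN
  rw [abs_mul, ht]
  exact hN.trans (mul_le_mul (le_abs_self N) hx.le hη.le (abs_nonneg N))

lemma fc_mollifier (hN : 2 ≤ N) (n : ℤ) : fc (mollifier N) n = realFourier lineDensity (n / N) := by
  have hN0 : (0 : ℝ) < N := zero_lt_two.trans_le hN
  rw [mollifier, fc_const_smul, Pi.smul_apply,
    fc_periodize hN0 (lineDensity_eq_zero_of_half_le hN), Complex.real_smul,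
    ← mul_assoc, ← Complex.ofReal_mul, mul_inv_cancel₀ hN0.ne', Complex.ofReal_one, one_mul]

lemma integral_mollifier (hN : 2 ≤ N) : ∫ x, mollifier N x ∂hm = 1 := by
  have h := fc_zero_eq_integral (mollifier N)
  rw [fc_mollifier hN, Int.cast_zero, zero_div, realFourier_lineDensity_zero] at h
  exact_mod_cast h.symm

lemma tendsto_realFourier_lineDensity_div (n : ℤ) :
    Tendsto (fun N : ℕ => realFourier lineDensity (n / N)) atTop (𝓝 1) := by
  have hcont := continuous_realFourier contDiff_lineDensity hasCompactSupport_lineDensity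
  rw [← realFourier_lineDensity_zero]
  exact (hcont.tendsto 0).comp (tendsto_const_div_atTop_nhds_zero_nat _)

lemma summable_norm_realFourier_div_mul {β : ℝ → ℝ} (hβ : ContDiff ℝ ∞ β)
    (hc : HasCompactSupport β) (hN : 0 < N) (q : ℕ) :
    Summable fun k : ℤ => ‖realFourier β (k / N)‖ * (1 + |(k : ℝ)|) ^ q := by
  obtain ⟨K, hK⟩ := exists_abs_pow_mul_norm_realFourier_le hβ hc (q + 2)
  have hdom : Summable fun k : ℤ => 2 ^ q * N ^ (q + 2) * K * (1 / (k : ℝ) ^ 2) :=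
    (Real.summable_one_div_int_pow.2 one_lt_two).mul_left _
  refine hdom.of_norm_bounded_eventually ?_
  filter_upwards [(Set.finite_singleton (0 : ℤ)).compl_mem_cofinite] with k hk
  have hk1 : 1 ≤ |(k : ℝ)| := by exact_mod_cast Int.one_le_abs hk
  have hdecay := hK (k / N)
  rw [abs_div, abs_of_pos hN, div_pow, div_mul_eq_mul_div, div_le_iff₀ (by positivity)] at hdecay
  rw [Real.norm_of_nonneg (by positivity), mul_one_div, ← sq_abs (k : ℝ),
    le_div_iff₀ (pow_pos (zero_lt_one.trans_le hk1) 2)]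
  calc ‖realFourier β (k / N)‖ * (1 + |(k : ℝ)|) ^ q * |(k : ℝ)| ^ 2
      ≤ ‖realFourier β (k / N)‖ * (2 * |(k : ℝ)|) ^ q * |(k : ℝ)| ^ 2 := by
        gcongr
        linarith
    _ = 2 ^ q * (|(k : ℝ)| ^ (q + 2) * ‖realFourier β (k / N)‖) := by ring
    _ ≤ 2 ^ q * (K * N ^ (q + 2)) := by gcongr
    _ = 2 ^ q * N ^ (q + 2) * K := by ring

lemma fc_convolution_mollifier {f : UnitAddCircle → ℝ} (hf : Integrable f hm) (hN : 2 ≤ N) :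
    fc (f ⋆[lsmul ℝ ℝ, hm] mollifier N) =
      (fun n : ℤ => realFourier lineDensity (n / N)) * fc f := by
  rw [fc_convolution hf (integrable_hm_of_continuous (continuous_mollifier hN)),
    funext (fc_mollifier hN)]

lemma exists_mollification {f : UnitAddCircle → ℝ} {E : Set UnitAddCircle} {M τ : ℝ} {w : ℤ → ℝ}
    (hw : ∀ n, 0 ≤ w n) (hf : Integrable f hm) (hfM : ∀ᵐ x ∂hm, 0 ≤ f x ∧ f x ≤ M)
    (hfw : MemWeightedL2 w (fc f)) (hsupp : measSupport f ⊆ E) (hη : 0 < η) (hτ : 0 < τ) (q : ℕ) :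
    ∃ g : UnitAddCircle → ℝ, Continuous g ∧ (∀ x, g x ∈ Set.Icc 0 M) ∧
      (∀ x ∉ Metric.cthickening η E, g x = 0) ∧
      Summable (fun k : ℤ => ‖fc g k‖ * (1 + |(k : ℝ)|) ^ q) ∧
      MemWeightedL2 w (fc g) ∧ weightedNorm w (fc f - fc g) < τ := by
  have hlim := tendsto_weightedNorm_sub_mul (l := atTop) hw hfw
    (fun (N : ℕ) n => norm_realFourier_lineDensity_le_one (n / N))
    tendsto_realFourier_lineDensity_div
  obtain ⟨N, ⟨hNτ, hN⟩, hNη⟩ := (((hlim.eventually_lt_const hτ).and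
    (tendsto_natCast_atTop_atTop.eventually_ge_atTop (2 : ℝ))).and
    (tendsto_natCast_atTop_atTop.eventually_ge_atTop (1 / η))).exists
  have hN0 : (0 : ℝ) < N := zero_lt_two.trans_le hN
  have hfc := fc_convolution_mollifier hf hN
  refine ⟨f ⋆[lsmul ℝ ℝ, hm] mollifier N, continuous_convolution hf (continuous_mollifier hN),
    convolution_mem_Icc hf hfM (continuous_mollifier hN) (mollifier_nonneg hN0.le)
      (integral_mollifier hN),
    fun x hx => convolution_eq_zero_of_notMem_cthickening
      (ae_eq_zero_of_measSupport_subset hsupp) (fun y => mollifier_eq_zero hη hNη) hx,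
    ?_, ?_, by rwa [hfc]⟩
  · refine ((summable_norm_realFourier_div_mul contDiff_lineDensity hasCompactSupport_lineDensity
      hN0 q).mul_right (∫ x, |f x| ∂hm)).of_nonneg_of_le (fun k => by positivity) fun k => ?_
    rw [hfc, Pi.mul_apply, norm_mul, mul_right_comm]
    gcongr
    exact norm_fc_le f k
  · refine hfw.of_norm_le hw fun n => ?_
    rw [hfc, Pi.mul_apply, norm_mul]
    exact mul_le_of_le_one_left (norm_nonneg _) (norm_realFourier_lineDensity_le_one _)

end Mollification

section Cutting

variable {f φ : UnitAddCircle → ℝ} {w : ℤ → ℝ} {M ε : ℝ}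

/-- The function `f * (1 - φ)`, normalized so that it stays below `sup f` when `φ ≥ -ε`. -/
def cutoff (ε : ℝ) (φ f : UnitAddCircle → ℝ) : UnitAddCircle → ℝ :=
  (1 + ε)⁻¹ • (f + (-1 : ℝ) • (f * φ))

lemma cutoff_apply (ε : ℝ) (φ f : UnitAddCircle → ℝ) (x : UnitAddCircle) :
    cutoff ε φ f x = (1 + ε)⁻¹ * (f x * (1 - φ x)) := by
  simp only [cutoff, Pi.smul_apply, Pi.add_apply, Pi.mul_apply, smul_eq_mul]
  ring

lemma continuous_cutoff (hf : Continuous f) (hφ : Continuous φ) : Continuous (cutoff ε φ f) :=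
  (hf.add ((hf.mul hφ).const_smul _)).const_smul _

lemma cutoff_mem_Icc (hε : 0 < ε) (hf : ∀ x, f x ∈ Set.Icc 0 M) (hφ : ∀ x, φ x ∈ Set.Icc (-ε) 1)
    (x : UnitAddCircle) : cutoff ε φ f x ∈ Set.Icc 0 M := by
  obtain ⟨hf0, hfM⟩ := hf x
  obtain ⟨hφε, hφ1⟩ := hφ x
  rw [cutoff_apply, inv_mul_eq_div]
  refine ⟨div_nonneg (mul_nonneg hf0 (by linarith)) (by linarith), ?_⟩
  rw [div_le_iff₀ (by linarith)]
  exact mul_le_mul hfM (by linarith) (by linarith) (hf0.trans hfM)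

lemma fc_cutoff (hf : Continuous f) (hφ : Continuous φ) :
    fc (cutoff ε φ f) = (1 + ε)⁻¹ • (fc f + (-1 : ℝ) • fc (f * φ)) := by
  rw [cutoff, fc_const_smul, fc_add (integrable_hm_of_continuous hf)
    (integrable_hm_of_continuous ((hf.mul hφ).const_smul _)), fc_const_smul]

lemma memWeightedL2_fc_cutoff (hw : ∀ n, 0 ≤ w n) (hf : Continuous f) (hφ : Continuous φ)
    (hfw : MemWeightedL2 w (fc f)) (hfφw : MemWeightedL2 w (fc (f * φ))) :
    MemWeightedL2 w (fc (cutoff ε φ f)) := by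
  rw [fc_cutoff hf hφ]
  exact (hfw.add hw (hfφw.const_smul _)).const_smul _

lemma weightedNorm_fc_sub_fc_cutoff_le (hw : ∀ n, 0 ≤ w n) (hε : 0 < ε) (hf : Continuous f)
    (hφ : Continuous φ) (hfw : MemWeightedL2 w (fc f)) (hfφw : MemWeightedL2 w (fc (f * φ))) :
    weightedNorm w (fc f - fc (cutoff ε φ f)) ≤
      ε * weightedNorm w (fc f) + weightedNorm w (fc (f * φ)) := by
  have hc : (1 + ε)⁻¹ ≤ 1 := inv_le_one_of_one_le₀ (by linarith)
  have hc0 : 0 ≤ (1 + ε)⁻¹ := by positivity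
  have hdiff : fc f - fc (cutoff ε φ f) = (1 + ε)⁻¹ • (ε • fc f + fc (f * φ)) := by
    have hone : fc f = (1 + ε)⁻¹ • (1 + ε) • fc f := (inv_smul_smul₀ (by positivity) _).symm
    rw [fc_cutoff hf hφ]
    nth_rw 1 [hone]
    module
  rw [hdiff, weightedNorm_const_smul, Real.norm_of_nonneg hc0]
  calc (1 + ε)⁻¹ * weightedNorm w (ε • fc f + fc (f * φ))
      ≤ weightedNorm w (ε • fc f + fc (f * φ)) := mul_le_of_le_one_left weightedNorm_nonneg hc
    _ ≤ weightedNorm w (ε • fc f) + weightedNorm w (fc (f * φ)) :=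
        weightedNorm_add_le hw (hfw.const_smul ε) hfφw
    _ = ε * weightedNorm w (fc f) + weightedNorm w (fc (f * φ)) := by
        rw [weightedNorm_const_smul, Real.norm_of_nonneg hε.le]

lemma exists_approx_eventuallyEq_zero {lam : ℕ → ℝ} {C : ℝ} {q : ℕ} (hlam : ∀ n, 0 < lam n)
    (hmod : IsModerate lam C q) (hdiv : ¬ Summable fun n : ℕ => 1 / lam (n + 1))
    (a : UnitAddCircle) (hf : Continuous f) (hfM : ∀ x, f x ∈ Set.Icc 0 M)
    (hfq : Summable fun k : ℤ => ‖fc f k‖ * (1 + |(k : ℝ)|) ^ q)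
    (hfw : MemWeightedL2 (evenExt lam) (fc f)) {τ : ℝ} (hτ : 0 < τ) :
    ∃ g : UnitAddCircle → ℝ, Continuous g ∧ (∀ x, g x ∈ Set.Icc 0 M) ∧
      (∀ x, f x = 0 → g x = 0) ∧ g =ᶠ[𝓝 a] 0 ∧ MemWeightedL2 (evenExt lam) (fc g) ∧
      weightedNorm (evenExt lam) (fc f - fc g) < τ := by
  have hw (n : ℤ) : 0 ≤ evenExt lam n := (hlam _).le
  obtain ⟨A, hA⟩ := hmod.exists_weightedNorm_fc_mul_le hlam hf hfq
  set S := weightedNorm (evenExt lam) (fc f)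
  obtain ⟨ε, hε, hεS⟩ : ∃ ε > 0, S * ε < τ / 2 := exists_pos_mul_lt (half_pos hτ) S
  obtain ⟨σ, hσ, hσA⟩ : ∃ σ > 0, |A| * σ < τ / 2 := exists_pos_mul_lt (half_pos hτ) |A|
  obtain ⟨φ, hφ, hφε, hφa, hφw, hφσ⟩ := exists_peak hlam hmod hdiv a hε hσ
  obtain ⟨hfφw, hfφA⟩ := hA φ (integrable_hm_of_continuous hφ) hφw
  refine ⟨cutoff ε φ f, continuous_cutoff hf hφ, cutoff_mem_Icc hε hfM hφε,
    fun x hx => by simp [cutoff_apply, hx], ?_, memWeightedL2_fc_cutoff hw hf hφ hfw hfφw, ?_⟩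
  · filter_upwards [hφa] with x hx
    simp [cutoff_apply, hx]
  · calc weightedNorm (evenExt lam) (fc f - fc (cutoff ε φ f))
        ≤ ε * S + weightedNorm (evenExt lam) (fc (f * φ)) :=
          weightedNorm_fc_sub_fc_cutoff_le hw hε hf hφ hfw hfφw
      _ ≤ ε * S + |A| * σ := by grw [hfφA, ← hφσ, ← le_abs_self A]; exact weightedNorm_nonneg
      _ < τ := by linarith

end Cutting

section Geometry

variable {E : Set UnitAddCircle} {a x : UnitAddCircle} {η r : ℝ}

lemma exists_mem_cthickening_diff_ball (hr : 0 < r) (hrη : 2 * r ≤ η) (hη : η ≤ 1 / 2)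
    (hx : x ∈ E) : ∃ y ∈ Metric.cthickening η E \ Metric.ball a r, dist x y ≤ η := by
  by_cases h : x ∈ Metric.ball a r
  · set y : UnitAddCircle := a + (r : UnitAddCircle)
    have hya : dist y a = r := by
      rw [dist_eq_norm, add_sub_cancel_left, (AddCircle.norm_coe_eq_abs_iff 1 one_ne_zero).2,
        abs_of_pos hr]
      rw [abs_of_pos hr, abs_one]
      linarith
    have hxy : dist x y ≤ η := by linarith [dist_triangle_right x y a, Metric.mem_ball.1 h]
    exact ⟨y, ⟨Metric.mem_cthickening_of_dist_le y x η E hx (dist_comm x y ▸ hxy),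
      fun hy => (Metric.mem_ball.1 hy).ne hya⟩, hxy⟩
  · exact ⟨x, ⟨Metric.self_subset_cthickening _ hx, h⟩, by rw [dist_self]; linarith⟩

lemma dC_le_of_forall_infDist_le {K : Set UnitAddCircle} {s t : ℝ} (hE : E.Nonempty)
    (hK : K.Nonempty) (hEK : ∀ x ∈ E, Metric.infDist x K ≤ s)
    (hKE : ∀ y ∈ K, Metric.infDist y E ≤ t) : dC E K ≤ s + t := by
  have := hE.to_subtype
  have := hK.to_subtype
  exact add_le_add (ciSup_le fun x => hEK x x.2) (ciSup_le fun y => hKE y y.2)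

lemma isCompact_cthickening_diff_ball : IsCompact (Metric.cthickening η E \ Metric.ball a r) :=
  (Metric.isClosed_cthickening.sdiff Metric.isOpen_ball).isCompact

lemma nonempty_cthickening_diff_ball (hE : E.Nonempty) (hr : 0 < r) (hrη : 2 * r ≤ η)
    (hη : η ≤ 1 / 2) : (Metric.cthickening η E \ Metric.ball a r).Nonempty :=
  have ⟨y, hy, _⟩ := exists_mem_cthickening_diff_ball hr hrη hη hE.some_mem
  ⟨y, hy⟩

lemma dC_cthickening_diff_ball_le (hE : E.Nonempty) (hr : 0 < r) (hrη : 2 * r ≤ η)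
    (hη : η ≤ 1 / 2) : dC E (Metric.cthickening η E \ Metric.ball a r) ≤ η + η := by
  refine dC_le_of_forall_infDist_le hE (nonempty_cthickening_diff_ball hE hr hrη hη)
    (fun x hx => ?_) fun y hy => ?_
  · obtain ⟨y, hy, hxy⟩ := exists_mem_cthickening_diff_ball hr hrη hη hx
    exact (Metric.infDist_le_dist_of_mem hy).trans hxy
  · exact ENNReal.toReal_le_of_le_ofReal (by linarith) (Metric.mem_cthickening_iff.1 hy.1)

end Geometry

lemma exists_approx_of_doubling {lam : ℕ → ℝ} (hlam : ∀ n, 0 < lam n)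
    (hdiv : ¬ Summable fun n : ℕ => 1 / lam (n + 1))
    (hdbl : ∃ C : ℝ, 1 < C ∧ ∀ n k : ℕ, 1 ≤ n → n ≤ k → k ≤ 2 * n →
      C⁻¹ * lam n ≤ lam k ∧ lam k ≤ C * lam n)
    (a : UnitAddCircle) {f : UnitAddCircle → ℝ} {E : Set UnitAddCircle} {M η τ : ℝ}
    (hf : Integrable f hm) (hfM : ∀ᵐ x ∂hm, 0 ≤ f x ∧ f x ≤ M)
    (hfw : MemWeightedL2 (evenExt lam) (fc f)) (hsupp : measSupport f ⊆ E)
    (hη : 0 < η) (hτ : 0 < τ) :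
    ∃ g : UnitAddCircle → ℝ, Continuous g ∧ (∀ x, g x ∈ Set.Icc 0 M) ∧
      (∀ x ∉ Metric.cthickening η E, g x = 0) ∧ g =ᶠ[𝓝 a] 0 ∧
      MemWeightedL2 (evenExt lam) (fc g) ∧
      weightedNorm (evenExt lam) (fc f - fc g) < τ := by
  obtain ⟨C, hC, hdbl⟩ := hdbl
  obtain ⟨q, hq⟩ := pow_unbounded_of_one_lt C one_lt_two
  have hmod := isModerate_of_doubling hlam (zero_lt_one.trans hC) hdbl hq.le
  have hw (n : ℤ) : 0 ≤ evenExt lam n := (hlam _).le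
  obtain ⟨f₁, hf₁, hf₁M, hf₁E, hf₁q, hf₁w, hff₁⟩ :=
    exists_mollification hw hf hfM hfw hsupp hη (half_pos hτ) q
  obtain ⟨g, hg, hgM, hgf₁, hga, hgw, hf₁g⟩ :=
    exists_approx_eventuallyEq_zero hlam hmod hdiv a hf₁ hf₁M hf₁q hf₁w (half_pos hτ)
  refine ⟨g, hg, hgM, fun x hx => hgf₁ x (hf₁E x hx), hga, hgw, ?_⟩
  calc weightedNorm (evenExt lam) (fc f - fc g)
      ≤ weightedNorm (evenExt lam) (fc f - fc f₁) + weightedNorm (evenExt lam) (fc f₁ - fc g) :=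
        weightedNorm_sub_le_add hw hfw hf₁w hgw
    _ < τ := by linarith

theorem statement15_general (lam : ℕ → ℝ) (hlam : ∀ n, 0 < lam n)
    (hdiv : ¬ Summable (fun n : ℕ => 1 / lam (n + 1)))
    (hdbl : ∃ C : ℝ, 1 < C ∧ ∀ n k : ℕ, 1 ≤ n → n ≤ k → k ≤ 2 * n →
      C⁻¹ * lam n ≤ lam k ∧ lam k ≤ C * lam n)
    (a : UnitAddCircle) (M : ℝ)
    (f : UnitAddCircle → ℝ) (hf : Integrable f hm)
    (hfbd : ∀ᵐ x ∂hm, 0 ≤ f x ∧ f x ≤ M)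
    (hfsum : Summable (fun n : ℤ => ‖fc f n‖ ^ 2 * lam n.natAbs))
    (E : Set UnitAddCircle) (hEne : E.Nonempty)
    (hsupp : measSupport f ⊆ E) (δ : ℝ) (hδ : 0 < δ) :
    ∃ g : UnitAddCircle → ℝ, ∃ K : Set UnitAddCircle,
      MemLp g 2 hm ∧ (∀ᵐ x ∂hm, 0 ≤ g x ∧ g x ≤ M) ∧
      Summable (fun n : ℤ => ‖fc g n‖ ^ 2 * lam n.natAbs) ∧
      IsCompact K ∧ K.Nonempty ∧ measSupport g ⊆ K ∧
      (∃ ρ : ℝ, 0 < ρ ∧ ∀ y ∈ K, ¬ dist y a < ρ) ∧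
      dC E K + dlam lam f g < δ := by
  obtain ⟨η, hη, hη'⟩ : ∃ η > 0, η ≤ min (δ / 4) (1 / 2) := ⟨_, by positivity, le_rfl⟩
  obtain ⟨hηδ, hη2⟩ := le_min_iff.1 hη'
  obtain ⟨g, hg, hgM, hgE, hga, hgw, hfg⟩ :=
    exists_approx_of_doubling hlam hdiv hdbl a hf hfbd hfsum hsupp hη (half_pos hδ)
  obtain ⟨s, hs, hgs⟩ := Metric.eventually_nhds_iff_ball.1 hga
  obtain ⟨r, hr, hr'⟩ : ∃ r > 0, r ≤ min s (η / 2) := ⟨_, by positivity, le_rfl⟩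
  obtain ⟨hrs, hrη⟩ := le_min_iff.1 hr'
  rw [le_div_iff₀' two_pos] at hrη
  have hK : IsCompact (Metric.cthickening η E \ Metric.ball a r) := isCompact_cthickening_diff_ball
  have hgK : ∀ x ∉ Metric.cthickening η E \ Metric.ball a r, g x = 0 := fun x hx => by
    by_cases hxa : x ∈ Metric.ball a r
    · exact hgs x (Metric.ball_subset_ball hrs hxa)
    · exact hgE x fun hxE => hx ⟨hxE, hxa⟩
  refine ⟨g, _, hg.memLp_of_hasCompactSupport (.of_compactSpace g), .of_forall hgM, hgw, hK,
    nonempty_cthickening_diff_ball hEne hr hrη hη2, measSupport_subset hK.isClosed hgK,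
    ⟨r, hr, fun y hy => hy.2⟩, ?_⟩
  have hdC := dC_cthickening_diff_ball_le (a := a) hEne hr hrη hη2
  change _ + weightedNorm (evenExt lam) (fc f - fc g) < δ
  linarith

/-- density. Under `Σ 1/λ_n = ∞`, the doubling condition and `λ_n ≥ 1`, for
every point `a ∈ 𝕋`, every admissible pair `(f,E)` (with `0 ≤ f ≤ 2` a.e.,
`‖f‖_{ℓ²(λ)} < ∞`, `E` nonempty compact containing the support of `f·m`) and every `δ > 0`
there is an admissible pair `(g,K)` with `K` avoiding some open arc containing `a` and
`d_𝒞(E,K) + ‖f − g‖_{ℓ²(λ)} < δ`. -/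
theorem statement15 (lam : ℕ → ℝ) (hlam : ∀ n, 1 ≤ lam n)
    (hdiv : ¬ Summable (fun n : ℕ => 1 / lam (n + 1)))
    (hdbl : ∃ C : ℝ, 1 < C ∧ ∀ n k : ℕ, 1 ≤ n → n ≤ k → k ≤ 2 * n →
      C⁻¹ * lam n ≤ lam k ∧ lam k ≤ C * lam n)
    (a : UnitAddCircle)
    (f : UnitAddCircle → ℝ) (hf2 : MemLp f 2 hm)
    (hfbd : ∀ᵐ x ∂hm, 0 ≤ f x ∧ f x ≤ 2)
    (hfsum : Summable (fun n : ℤ => ‖fc f n‖ ^ 2 * lam n.natAbs))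
    (E : Set UnitAddCircle) (hE : IsCompact E) (hEne : E.Nonempty)
    (hsupp : measSupport f ⊆ E) (δ : ℝ) (hδ : 0 < δ) :
    ∃ g : UnitAddCircle → ℝ, ∃ K : Set UnitAddCircle,
      MemLp g 2 hm ∧ (∀ᵐ x ∂hm, 0 ≤ g x ∧ g x ≤ 2) ∧
      Summable (fun n : ℤ => ‖fc g n‖ ^ 2 * lam n.natAbs) ∧
      IsCompact K ∧ K.Nonempty ∧ measSupport g ⊆ K ∧
      (∃ ρ : ℝ, 0 < ρ ∧ ∀ y ∈ K, ¬ dist y a < ρ) ∧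
      dC E K + dlam lam f g < δ :=
  statement15_general lam (fun n => zero_lt_one.trans_le (hlam n)) hdiv hdbl a 2 f
    (hf2.integrable one_le_two) hfbd hfsum E hEne hsupp δ hδ
end
end

section
/- Let (λ_n)_{n≥1} be positive real numbers satisfying the doubling condition (there exists C > 1 such that C⁻¹ λ_n ≤ λ_k ≤ C λ_n whenever n ≥ 1 and n ≤ k ≤ 2n) and with λ_n ≥ 1 for all n. Then there exists M₀ > 1 (depending only on (λ_n)) such that the following holds for every integer N > 100·M₀ and every constant c > 0: if f is an infinitely differentiable real-valued function on 𝕋, and for each ε ∈ (0,1), ψ_ε : 𝕋 → ℝ is an integrable function satisfying ψ̂_ε(0) = 1, |ψ̂_ε(n)| ≤ min(ε, c·ε^{1−N}|n|^{−N}) for all n ≠ 0, and Σ_{n≠0} |ψ̂_ε(n)|² λ_{|n|} ≤ ε², then Σ_{n∈ℤ} |(f·ψ_ε)^{\wedge}(n) − f̂(n)|² λ_{|n|} → 0 as ε → 0⁺. -/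
/-!
The quantity in question is the squared norm of `f (ψ_ε - 1)` in the space of functions with
`∑ |ĝ(n)|² λ_{|n|} < ∞`. A doubling weight satisfies a Peetre inequality
`λ_{|m + n|} ≤ K (1 + |m|) ^ A λ_{|n|}`, because indices comparable up to `2 ^ j` have weights
comparable up to `C ^ j`. Hence, by Cauchy–Schwarz in the convolution `∑ f̂(m) ĝ(n - m)`,
multiplication by `f` is bounded on this space as soon as `∑ |f̂(m)| (1 + |m|) ^ A < ∞`, which
repeated integration by parts gives for smooth `f`; and `ψ_ε - 1` tends to `0` there.
-/

open MeasureTheory Filter Topology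

noncomputable section

open AddCircle
open scoped ENNReal

section Weights

/-- A sequence `w` is doubling with constant `C` if its values on each block `[n, 2n]` with `n ≥ 1`
agree up to the factor `C`. The value `w 0` is unconstrained. -/
def IsDoublingWith (C : ℝ) (w : ℕ → ℝ) : Prop :=
  ∀ n k : ℕ, 1 ≤ n → n ≤ k → k ≤ 2 * n → C⁻¹ * w n ≤ w k ∧ w k ≤ C * w n

/-- A weight `w` is moderate, of polynomial order `A` and with constant `K`, if a translation by `x`
changes it by a factor of at most `K (1 + ‖x‖) ^ A` (Peetre's inequality). -/
def IsModerateWith {G : Type*} [SeminormedAddGroup G] (K : ℝ) (A : ℕ) (w : G → ℝ) : Prop :=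
  ∀ x y, w (x + y) ≤ K * (1 + ‖x‖) ^ A * w y

variable {C : ℝ} {w : ℕ → ℝ}

lemma IsDoublingWith.le_mul (h : IsDoublingWith C w) (hC : 0 < C) {x y : ℕ} (hx : 1 ≤ x)
    (hy : 1 ≤ y) (hxy : x ≤ 2 * y) (hyx : y ≤ 2 * x) : w x ≤ C * w y := by
  rcases le_total x y with hle | hle
  · exact (inv_mul_le_iff₀ hC).1 (h x y hx hle hyx).1
  · exact (h y x hy hle hxy).2

lemma IsDoublingWith.le_pow_mul (h : IsDoublingWith C w) (hC : 0 < C) (j : ℕ) {x y : ℕ}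
    (hx : 1 ≤ x) (hy : 1 ≤ y) (hxy : x ≤ 2 ^ j * y) (hyx : y ≤ 2 ^ j * x) :
    w x ≤ C ^ j * w y := by
  induction j generalizing x with
  | zero =>
    obtain rfl : x = y := by omega
    simp
  | succ j ih =>
    rw [pow_succ', mul_assoc] at hxy hyx
    -- `z` is one dyadic step closer to `y` than `x` is.
    obtain ⟨z, hz, hxz, hzx, hzy, hyz⟩ : ∃ z, 1 ≤ z ∧ x ≤ 2 * z ∧ z ≤ 2 * x ∧
        z ≤ 2 ^ j * y ∧ y ≤ 2 ^ j * z := by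
      have hy_le : y ≤ 2 ^ j * y := Nat.le_mul_of_pos_left y (by positivity)
      rcases le_total x y with hle | hle
      · refine ⟨min (2 * x) y, by omega, by omega, by omega, by omega, ?_⟩
        rcases min_choice (2 * x) y with hz | hz <;> rw [hz]
        · linarith
        · exact hy_le
      · refine ⟨max ((x + 1) / 2) y, by omega, by omega, by omega, by omega, ?_⟩
        exact hy_le.trans (Nat.mul_le_mul_left _ (le_max_right _ _))
    calc w x ≤ C * w z := h.le_mul hC hx hz hxz hzx
      _ ≤ C * (C ^ j * w y) := by gcongr; exact ih hz hzy hyz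
      _ = C ^ (j + 1) * w y := by ring

lemma IsDoublingWith.le_two_mul_pow_mul (h : IsDoublingWith C w) (hC : 0 < C) {A : ℕ}
    (hCA : C ≤ 2 ^ A) {m x y : ℕ} (hx : 1 ≤ x) (hy : 1 ≤ y) (hxy : x ≤ m * y) (hyx : y ≤ m * x)
    (hwy : 0 ≤ w y) : w x ≤ (2 * m) ^ A * w y := by
  have hm0 : m ≠ 0 := by rintro rfl; omega
  set j := Nat.log 2 m + 1
  have hmj : m ≤ 2 ^ j := (Nat.lt_pow_succ_log_self one_lt_two m).le
  have hjm : 2 ^ j ≤ 2 * m := by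
    rw [pow_succ']
    exact Nat.mul_le_mul_left 2 (Nat.pow_log_le_self 2 hm0)
  have hpow : C ^ j ≤ (2 * m : ℝ) ^ A :=
    calc C ^ j ≤ (2 ^ A) ^ j := by gcongr
      _ = (2 ^ j) ^ A := pow_right_comm 2 A j
      _ ≤ (2 * m) ^ A := by gcongr; exact_mod_cast hjm
  calc w x ≤ C ^ j * w y :=
        h.le_pow_mul hC j hx hy (hxy.trans (by gcongr)) (hyx.trans (by gcongr))
    _ ≤ (2 * m) ^ A * w y := by gcongr

lemma exists_le_mul_max_one (hw : ∀ n, 0 < w n) :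
    ∃ L, ∀ n, w n ≤ L * w (max n 1) ∧ w (max n 1) ≤ L * w n := by
  refine ⟨1 + w 0 / w 1 + w 1 / w 0, fun n => ?_⟩
  have h0 := hw 0
  have h1 := hw 1
  rcases Nat.eq_zero_or_pos n with rfl | hn
  · have h01 : w 0 = w 0 / w 1 * w 1 := by field_simp
    have h10 : w 1 = w 1 / w 0 * w 0 := by field_simp
    simp only [zero_le, sup_of_le_right]
    constructor
    · nth_rw 1 [h01]
      gcongr
      linarith [div_pos h1 h0]
    · nth_rw 1 [h10]
      gcongr
      linarith [div_pos h0 h1]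
  · rw [max_eq_left hn]
    have hL : 1 ≤ 1 + w 0 / w 1 + w 1 / w 0 := by linarith [div_pos h0 h1, div_pos h1 h0]
    exact ⟨le_mul_of_one_le_left (hw n).le hL, le_mul_of_one_le_left (hw n).le hL⟩

lemma IsDoublingWith.exists_isModerateWith (h : IsDoublingWith C w) (hC : 0 < C)
    (hw : ∀ n, 0 < w n) : ∃ K A, IsModerateWith K A fun n : ℤ => w n.natAbs := by
  obtain ⟨A, hA⟩ := pow_unbounded_of_one_lt C one_lt_two
  obtain ⟨L, hL⟩ := exists_le_mul_max_one hw
  have hL0 : 0 ≤ L := (pos_of_mul_pos_left ((hw 0).trans_le (hL 0).1) (hw _).le).le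
  refine ⟨L * 2 ^ A * L, A, fun d k => ?_⟩
  set x := max (d + k).natAbs 1
  set y := max k.natAbs 1
  have hxy : x ≤ (1 + d.natAbs) * y := by
    have : d.natAbs ≤ d.natAbs * y := Nat.le_mul_of_pos_right _ (by omega)
    rw [add_mul]
    omega
  have hyx : y ≤ (1 + d.natAbs) * x := by
    have : d.natAbs ≤ d.natAbs * x := Nat.le_mul_of_pos_right _ (by omega)
    rw [add_mul]
    omega
  have hd : ((1 + d.natAbs : ℕ) : ℝ) = 1 + ‖d‖ := by
    push_cast
    rw [Nat.cast_natAbs, Int.norm_eq_abs, Int.cast_abs]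
  calc w (d + k).natAbs ≤ L * w x := (hL _).1
    _ ≤ L * ((2 * (1 + d.natAbs : ℕ)) ^ A * w y) := by
        gcongr
        exact h.le_two_mul_pow_mul hC hA.le (le_max_right _ _) (le_max_right _ _) hxy hyx (hw _).le
    _ ≤ L * ((2 * (1 + d.natAbs : ℕ)) ^ A * (L * w k.natAbs)) := by gcongr; exact (hL _).2
    _ = L * 2 ^ A * L * (1 + ‖d‖) ^ A * w k.natAbs := by rw [hd, mul_pow]; ring

end Weights

section Convolution

lemma sq_tsum_mul_le {α : Type*} (a b : α → ℝ≥0∞) :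
    (∑' k, a k * b k) ^ 2 ≤ (∑' k, a k) * ∑' k, a k * b k ^ 2 := by
  let _ : MeasurableSpace α := ⊤
  have hsqrt (x : ℝ≥0∞) : (x ^ (1 / 2 : ℝ)) ^ 2 = x := by
    rw [← ENNReal.rpow_natCast, ← ENNReal.rpow_mul]; norm_num
  have hmul (k : α) : a k ^ (1 / 2 : ℝ) * (a k ^ (1 / 2 : ℝ) * b k) = a k * b k := by
    rw [← mul_assoc, ← sq, hsqrt]
  have holder := ENNReal.lintegral_mul_le_Lp_mul_Lq Measure.count .two_two
    (f := fun k => a k ^ (1 / 2 : ℝ)) (g := fun k => a k ^ (1 / 2 : ℝ) * b k)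
    measurable_from_top.aemeasurable measurable_from_top.aemeasurable
  simp only [lintegral_count, Pi.mul_apply, hmul, ENNReal.rpow_ofNat, mul_pow, hsqrt] at holder
  calc (∑' k, a k * b k) ^ 2
      ≤ ((∑' k, a k) ^ (1 / 2 : ℝ) * (∑' k, a k * b k ^ 2) ^ (1 / 2 : ℝ)) ^ 2 := by gcongr
    _ = (∑' k, a k) * ∑' k, a k * b k ^ 2 := by rw [mul_pow, hsqrt, hsqrt]

lemma tsum_sq_convolution_mul_le {G : Type*} [AddCommGroup G] {a b v w : G → ℝ≥0∞}
    (hw : ∀ m n, w (m + n) ≤ v m * w n) :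
    ∑' n, (∑' m, a m * b (n - m)) ^ 2 * w n ≤
      (∑' m, a m) * (∑' m, a m * v m) * ∑' n, b n ^ 2 * w n := by
  have hshift (m n : G) : w n ≤ v m * w (n - m) := by simpa using hw m (n - m)
  calc ∑' n, (∑' m, a m * b (n - m)) ^ 2 * w n
      ≤ ∑' n, (∑' m, a m) * (∑' m, a m * b (n - m) ^ 2) * w n := by
        gcongr
        exact sq_tsum_mul_le a _
    _ = (∑' m, a m) * ∑' n, ∑' m, a m * b (n - m) ^ 2 * w n := by
        simp only [← ENNReal.tsum_mul_left, ← ENNReal.tsum_mul_right, mul_assoc]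
    _ ≤ (∑' m, a m) * ∑' n, ∑' m, a m * b (n - m) ^ 2 * (v m * w (n - m)) := by
        gcongr
        exact hshift _ _
    _ = (∑' m, a m) * ∑' m, a m * v m * ∑' n, b (n - m) ^ 2 * w (n - m) := by
        rw [ENNReal.tsum_comm]
        simp only [← ENNReal.tsum_mul_left, mul_assoc, mul_left_comm]
    _ = (∑' m, a m) * (∑' m, a m * v m) * ∑' n, b n ^ 2 * w n := by
        have htrans (m : G) : ∑' n, b (n - m) ^ 2 * w (n - m) = ∑' n, b n ^ 2 * w n :=
          (Equiv.subRight m).tsum_eq fun n => b n ^ 2 * w n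
        simp only [htrans, ENNReal.tsum_mul_right]
        rw [mul_assoc]

end Convolution

section FourierCoefficients

variable {T : ℝ} {E : Type*} [NormedAddCommGroup E]

lemma continuous_of_continuous_comp_coe {X : Type*} [TopologicalSpace X] {f : AddCircle T → X}
    (hf : Continuous fun t : ℝ => f t) : Continuous f :=
  continuous_coinduced_dom.2 hf

lemma exists_hasDerivAt_coe [NormedSpace ℝ E] {p : ℕ} {f : AddCircle T → E}
    (hf : ContDiff ℝ (p + 1) fun t : ℝ => f t) :
    ∃ f' : AddCircle T → E, ContDiff ℝ p (fun t : ℝ => f' t) ∧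
      ∀ t : ℝ, HasDerivAt (fun s : ℝ => f s) (f' t) t := by
  have hper : Function.Periodic (deriv fun s : ℝ => f s) T := fun t => by
    rw [← deriv_comp_add_const]
    simp only [coe_add_period]
  obtain ⟨hdiff, -, hderiv⟩ := contDiff_succ_iff_deriv.1 hf
  refine ⟨hper.lift, ?_, fun t => ?_⟩
  · simpa only [hper.lift_coe] using hderiv
  · simpa only [hper.lift_coe] using (hdiff t).hasDerivAt

lemma ofReal_norm_sq_mul (x : E) (r : ℝ) :
    ENNReal.ofReal (‖x‖ ^ 2 * r) = ‖x‖ₑ ^ 2 * ENNReal.ofReal r := by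
  rw [ENNReal.ofReal_mul (by positivity), ENNReal.ofReal_pow (norm_nonneg x), ofReal_norm]

variable [hT : Fact (0 < T)]

lemma integrable_haarAddCircle_of_continuous {f : AddCircle T → E} (hf : Continuous f) :
    Integrable f haarAddCircle :=
  hf.integrable_of_hasCompactSupport (.of_compactSpace f)

variable [NormedSpace ℂ E]

lemma fourierCoeff_sub {f g : AddCircle T → E} (hf : Integrable f haarAddCircle)
    (hg : Integrable g haarAddCircle) (n : ℤ) :
    fourierCoeff (fun x => f x - g x) n = fourierCoeff f n - fourierCoeff g n := by
  simp only [fourierCoeff, smul_sub]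
  exact integral_sub (hf.fourier_smul _) (hg.fourier_smul _)

lemma norm_fourierCoeff_le_integral_norm (f : AddCircle T → E) (n : ℤ) :
    ‖fourierCoeff f n‖ ≤ ∫ x, ‖f x‖ ∂haarAddCircle := by
  refine (norm_integral_le_integral_norm _).trans_eq ?_
  simp only [norm_smul, fourier_apply, Circle.norm_coe, one_mul]

lemma fourierCoeff_of_hasDerivAt [CompleteSpace E] {f f' : AddCircle T → E}
    (hf : ∀ t : ℝ, HasDerivAt (fun s : ℝ => f s) (f' t) t) (hf' : Continuous f') (n : ℤ) :
    fourierCoeff f' n = (2 * Real.pi * Complex.I * n / T : ℂ) • fourierCoeff f n := by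
  have hcoe : Continuous ((↑) : ℝ → AddCircle T) := AddCircle.continuous_mk' T
  have hparts := intervalIntegral.integral_smul_deriv_eq_deriv_smul (a := 0) (b := 0 + T)
    (fun t _ => hasDerivAt_fourier_neg T n t) (fun t _ => hf t)
    ((by fun_prop : Continuous _).intervalIntegrable _ _)
    ((hf'.comp hcoe).intervalIntegrable _ _)
  have hT0 : ((0 + T : ℝ) : AddCircle T) = (0 : ℝ) := coe_add_period T 0
  simp only [hT0, sub_self, zero_sub, mul_smul _ (fourier (-n) _ : ℂ),
    intervalIntegral.integral_smul, ← neg_smul] at hparts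
  rw [fourierCoeff_eq_intervalIntegral _ _ 0, fourierCoeff_eq_intervalIntegral _ _ 0, hparts,
    smul_comm]
  congr 2
  ring

lemma exists_pow_mul_norm_fourierCoeff_le [CompleteSpace E] {p : ℕ} {f : AddCircle T → E}
    (hf : ContDiff ℝ p fun t : ℝ => f t) :
    ∃ K, ∀ n : ℤ, ‖n‖ ^ p * ‖fourierCoeff f n‖ ≤ K := by
  induction p generalizing f with
  | zero => exact ⟨_, fun n => by simpa using norm_fourierCoeff_le_integral_norm f n⟩
  | succ p ih =>
    obtain ⟨f', hf', hderiv⟩ := exists_hasDerivAt_coe (mod_cast hf)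
    obtain ⟨K, hK⟩ := ih hf'
    have hf'_cont : Continuous f' := continuous_of_continuous_comp_coe hf'.continuous
    refine ⟨T / (2 * Real.pi) * K, fun n => ?_⟩
    have hT0 := hT.out
    have hnorm : ‖fourierCoeff f' n‖ = 2 * Real.pi * ‖n‖ / T * ‖fourierCoeff f n‖ := by
      rw [fourierCoeff_of_hasDerivAt hderiv hf'_cont, norm_smul]
      simp [abs_of_pos Real.pi_pos, abs_of_pos hT0, Int.norm_eq_abs]
    calc ‖n‖ ^ (p + 1) * ‖fourierCoeff f n‖
        = T / (2 * Real.pi) * (‖n‖ ^ p * ‖fourierCoeff f' n‖) := by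
          rw [hnorm]
          field_simp
          ring
      _ ≤ T / (2 * Real.pi) * K := by gcongr; exact hK n

lemma summable_norm_fourierCoeff_mul_one_add_norm_pow [CompleteSpace E] {A : ℕ}
    {f : AddCircle T → E} (hf : ContDiff ℝ (A + 2 : ℕ) fun t : ℝ => f t) :
    Summable fun n : ℤ => ‖fourierCoeff f n‖ * (1 + ‖n‖) ^ A := by
  obtain ⟨K, hK⟩ := exists_pow_mul_norm_fourierCoeff_le hf
  refine .of_norm_bounded_eventually
    ((Real.summable_one_div_int_pow.2 one_lt_two).mul_left (K * 2 ^ A)) ?_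
  filter_upwards [(Set.finite_singleton (0 : ℤ)).compl_mem_cofinite] with n hn
  have hn1 : 1 ≤ ‖n‖ := by
    rw [Int.norm_eq_abs]
    exact_mod_cast Int.one_le_abs hn
  rw [Real.norm_of_nonneg (by positivity), ← sq_abs (n : ℝ), ← Int.norm_eq_abs, mul_one_div,
    le_div_iff₀ (by positivity)]
  calc ‖fourierCoeff f n‖ * (1 + ‖n‖) ^ A * ‖n‖ ^ 2
      ≤ ‖fourierCoeff f n‖ * (2 * ‖n‖) ^ A * ‖n‖ ^ 2 := by gcongr; linarith
    _ = ‖n‖ ^ (A + 2) * ‖fourierCoeff f n‖ * 2 ^ A := by ring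
    _ ≤ K * 2 ^ A := by gcongr; exact hK n

lemma hasSum_fourierCoeff_smul {f : AddCircle T → ℂ} (hf : Continuous f)
    (hsum : Summable (fourierCoeff f)) {g : AddCircle T → E} (hg : Integrable g haarAddCircle)
    (n : ℤ) :
    HasSum (fun m => fourierCoeff f m • fourierCoeff g (n - m))
      (fourierCoeff (fun x => f x • g x) n) := by
  let F (m : ℤ) (x : AddCircle T) : E := fourierCoeff f m • fourier (-(n - m)) x • g x
  have hF_integral (m : ℤ) :
      ∫ x, F m x ∂haarAddCircle = fourierCoeff f m • fourierCoeff g (n - m) :=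
    integral_smul _ _
  have hF_norm (m : ℤ) :
      ∫ x, ‖F m x‖ ∂haarAddCircle = ‖fourierCoeff f m‖ * ∫ x, ‖g x‖ ∂haarAddCircle := by
    simp only [F, norm_smul, fourier_apply, Circle.norm_coe, one_mul, integral_const_mul]
  have hF_tsum (x : AddCircle T) : ∑' m, F m x = fourier (-n) x • f x • g x := by
    have hseries := has_pointwise_sum_fourier_series_of_summable (f := ⟨f, hf⟩) hsum x
    refine ((hseries.smul_const (fourier (-n) x • g x)).congr_fun fun m => ?_).tsum_eq.trans
      (smul_comm _ _ _)
    have hexp : -(n - m) = m + -n := by ring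
    simp only [F, hexp, fourier_add, smul_smul, smul_eq_mul, mul_assoc, ContinuousMap.coe_mk]
  have hexchange := hasSum_integral_of_summable_integral_norm (F := F) (μ := haarAddCircle)
    (fun m => (hg.fourier_smul _).smul _)
    (by simpa only [hF_norm] using hsum.norm.mul_right _)
  simp only [hF_integral, hF_tsum] at hexchange
  exact hexchange

/-- The squared norm `∑ ‖f̂ n‖² w n` of `f` in the Sobolev-type space with weight `w`, as an
extended nonnegative number; negative weights count as `0`. -/
def fourierEnergy (w : ℤ → ℝ) (f : AddCircle T → E) : ℝ≥0∞ :=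
  ∑' n, ‖fourierCoeff f n‖ₑ ^ 2 * ENNReal.ofReal (w n)

lemma exists_fourierEnergy_smul_le {K : ℝ} {A : ℕ} {w : ℤ → ℝ}
    (hw : ∀ n, 0 ≤ w n) (hmod : IsModerateWith K A w) {f : AddCircle T → ℂ}
    (hf : ContDiff ℝ (A + 2 : ℕ) fun t : ℝ => f t) :
    ∃ S ≠ ∞, ∀ g : AddCircle T → E, Integrable g haarAddCircle →
      fourierEnergy w (fun x => f x • g x) ≤ S * fourierEnergy w g := by
  let v (m : ℤ) : ℝ≥0∞ := ENNReal.ofReal (K * (1 + ‖m‖) ^ A)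
  have hsumA := summable_norm_fourierCoeff_mul_one_add_norm_pow hf
  have hsum : Summable (fourierCoeff f) := .of_norm_bounded hsumA fun n =>
    le_mul_of_one_le_right (norm_nonneg _) (one_le_pow₀ (by simp))
  have hfv (m : ℤ) : ‖fourierCoeff f m‖ₑ * v m =
      ENNReal.ofReal (K * (‖fourierCoeff f m‖ * (1 + ‖m‖) ^ A)) := by
    rw [← ofReal_norm, ← ENNReal.ofReal_mul (norm_nonneg _), mul_left_comm]
  refine ⟨(∑' m, ‖fourierCoeff f m‖ₑ) * ∑' m, ‖fourierCoeff f m‖ₑ * v m,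
    ENNReal.mul_ne_top ?_ ?_, fun g hg => ?_⟩
  · simpa only [ofReal_norm] using hsum.norm.tsum_ofReal_ne_top
  · simpa only [hfv] using (hsumA.mul_left K).tsum_ofReal_ne_top
  have hconv (n : ℤ) : ‖fourierCoeff (fun x => f x • g x) n‖ₑ ≤
      ∑' m, ‖fourierCoeff f m‖ₑ * ‖fourierCoeff g (n - m)‖ₑ := by
    have hcont := continuous_of_continuous_comp_coe hf.continuous
    rw [← (hasSum_fourierCoeff_smul hcont hsum hg n).tsum_eq]
    simpa only [enorm_smul] using enorm_tsum_le_tsum_enorm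
      (f := fun m => fourierCoeff f m • fourierCoeff g (n - m))
  calc fourierEnergy w (fun x => f x • g x)
      ≤ ∑' n, (∑' m, ‖fourierCoeff f m‖ₑ * ‖fourierCoeff g (n - m)‖ₑ) ^ 2 *
          ENNReal.ofReal (w n) := by
        unfold fourierEnergy
        gcongr with n
        exact hconv n
    _ ≤ _ := tsum_sq_convolution_mul_le fun m n => by
        rw [← ENNReal.ofReal_mul' (hw n)]
        exact ENNReal.ofReal_le_ofReal (hmod m n)

lemma tendsto_fourierEnergy_sub_one {ι : Type*} {l : Filter ι} {w : ℤ → ℝ}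
    {ψ : ι → AddCircle T → ℂ} (hψ : ∀ᶠ i in l, Integrable (ψ i) haarAddCircle)
    (hψ_zero : Tendsto (fun i => fourierCoeff (ψ i) 0) l (𝓝 1))
    (hψ_ne : Tendsto (fun i => ∑' n : ℤ,
      ENNReal.ofReal (if n = 0 then 0 else ‖fourierCoeff (ψ i) n‖ ^ 2 * w n)) l (𝓝 0)) :
    Tendsto (fun i => fourierEnergy w fun x => ψ i x - 1) l (𝓝 0) := by
  have hone : fourierCoeff (fun _ : AddCircle T => (1 : ℂ)) = Pi.single 0 1 := by
    rw [← fourierCoeff_fourier (T := T)]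
    congr 1
    ext x
    simp
  have hzero :
      Tendsto (fun i => ENNReal.ofReal (‖fourierCoeff (ψ i) 0 - 1‖ ^ 2 * w 0)) l (𝓝 0) := by
    simpa using ENNReal.tendsto_ofReal (((hψ_zero.sub_const 1).norm.pow 2).mul_const (w 0))
  have hsplit := hzero.add hψ_ne
  rw [add_zero] at hsplit
  refine hsplit.congr' ?_
  filter_upwards [hψ] with i hi
  unfold fourierEnergy
  simp only [fourierCoeff_sub hi (integrable_const 1), hone]
  conv_rhs => rw [ENNReal.tsum_eq_add_tsum_ite 0]
  congr 1
  · simp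
  · refine tsum_congr fun n => ?_
    split_ifs with hn <;> simp [hn]

end FourierCoefficients

lemma tendsto_tsum_ofReal_of_tsum_le {ι α : Type*} {l : Filter ι} {F : ι → α → ℝ} {b : ι → ℝ}
    (hF : ∀ᶠ i in l, (∀ n, 0 ≤ F i n) ∧ Summable (F i) ∧ ∑' n, F i n ≤ b i)
    (hb : Tendsto b l (𝓝 0)) : Tendsto (fun i => ∑' n, ENNReal.ofReal (F i n)) l (𝓝 0) := by
  refine tendsto_of_tendsto_of_tendsto_of_le_of_le' tendsto_const_nhds
    (by simpa using ENNReal.tendsto_ofReal hb) (.of_forall fun _ => zero_le) ?_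
  filter_upwards [hF] with i ⟨hnonneg, hsum, hle⟩
  rw [← ENNReal.ofReal_tsum_of_nonneg hnonneg hsum]
  exact ENNReal.ofReal_le_ofReal hle

theorem statement17_general {C : ℝ} {w : ℕ → ℝ} (hC : 0 < C) (hdbl : IsDoublingWith C w)
    (hw : ∀ n, 0 < w n) :
    ∃ r : ℕ, ∀ {T : ℝ} [Fact (0 < T)] {ι : Type*} {l : Filter ι} {f : AddCircle T → ℂ}
      {ψ : ι → AddCircle T → ℂ}, ContDiff ℝ r (fun t : ℝ => f t) →
      (∀ᶠ i in l, Integrable (ψ i) haarAddCircle) →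
      Tendsto (fun i => fourierCoeff (ψ i) 0) l (𝓝 1) →
      Tendsto (fun i => ∑' n : ℤ, ENNReal.ofReal
        (if n = 0 then 0 else ‖fourierCoeff (ψ i) n‖ ^ 2 * w n.natAbs)) l (𝓝 0) →
      Tendsto (fun i => ∑' n : ℤ, ENNReal.ofReal
        (‖fourierCoeff (fun x => f x * ψ i x) n - fourierCoeff f n‖ ^ 2 * w n.natAbs))
        l (𝓝 0) := by
  obtain ⟨K, A, hmod⟩ := hdbl.exists_isModerateWith hC hw
  refine ⟨A + 2, fun {T} _ {ι l f ψ} hf hψ hψ_zero hψ_ne => ?_⟩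
  obtain ⟨S, hS, hmul⟩ := exists_fourierEnergy_smul_le (E := ℂ) (fun n => (hw n.natAbs).le) hmod hf
  have hlim := tendsto_fourierEnergy_sub_one hψ hψ_zero hψ_ne
  have hbound := ENNReal.Tendsto.const_mul hlim (.inr hS)
  rw [mul_zero] at hbound
  refine tendsto_of_tendsto_of_tendsto_of_le_of_le' tendsto_const_nhds hbound
    (.of_forall fun _ => zero_le) ?_
  filter_upwards [hψ] with i hi
  have hf_cont : Continuous f := continuous_of_continuous_comp_coe hf.continuous
  have hf_int := integrable_haarAddCircle_of_continuous hf_cont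
  have hfψ : Integrable (fun x => f x * ψ i x) haarAddCircle :=
    hi.bdd_mul hf_int.aestronglyMeasurable <|
      .of_forall (ContinuousMap.norm_coe_le_norm ⟨f, hf_cont⟩)
  refine le_of_eq_of_le ?_ (hmul _ (hi.sub (integrable_const 1)))
  simp only [fourierEnergy, ofReal_norm_sq_mul, smul_eq_mul, mul_sub, mul_one]
  refine tsum_congr fun n => ?_
  rw [fourierCoeff_sub hfψ hf_int]

/-- with `(λ_n)` doubling and `λ_n ≥ 1`, there is `M₀ > 1` such that for any
integer `N > 100·M₀` and constant `c > 0`: if `f` is `C^∞` on `𝕋` and for each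
`ε ∈ (0,1)` the integrable function `ψ_ε` satisfies `ψ̂_ε(0) = 1`,
`|ψ̂_ε(n)| ≤ min(ε, c ε^{1-N} |n|^{-N})` for `n ≠ 0`, and
`Σ_{n ≠ 0} |ψ̂_ε(n)|² λ_{|n|} ≤ ε²`, then
`Σ_{n ∈ ℤ} |(f·ψ_ε)^∧(n) − f̂(n)|² λ_{|n|} → 0` as `ε → 0⁺`. -/
theorem statement17 (lam : ℕ → ℝ) (hlam : ∀ n, 1 ≤ lam n)
    (hdbl : ∃ C : ℝ, 1 < C ∧ ∀ n k : ℕ, 1 ≤ n → n ≤ k → k ≤ 2 * n →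
      C⁻¹ * lam n ≤ lam k ∧ lam k ≤ C * lam n) :
    ∃ M₀ : ℝ, 1 < M₀ ∧
      ∀ N : ℕ, 100 * M₀ < (N : ℝ) → ∀ c : ℝ, 0 < c →
      ∀ f : UnitAddCircle → ℝ, ContDiff ℝ (⊤ : ℕ∞) (fun t : ℝ => f (t : UnitAddCircle)) →
      ∀ ψ : ℝ → UnitAddCircle → ℝ,
        (∀ ε : ℝ, 0 < ε → ε < 1 →
          Integrable (ψ ε) hm ∧
          fc (ψ ε) 0 = 1 ∧
          (∀ n : ℤ, n ≠ 0 →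
            ‖fc (ψ ε) n‖ ≤ min ε (c * ε ^ (1 - (N : ℝ)) * (n.natAbs : ℝ) ^ (-(N : ℝ)))) ∧
          Summable (fun n : ℤ => if n = 0 then 0 else ‖fc (ψ ε) n‖ ^ 2 * lam n.natAbs) ∧
          (∑' n : ℤ, if n = 0 then 0 else ‖fc (ψ ε) n‖ ^ 2 * lam n.natAbs) ≤ ε ^ 2) →
        Tendsto (fun ε : ℝ => ∑' n : ℤ,
            ENNReal.ofReal (‖fc (fun x => f x * ψ ε x) n - fc f n‖ ^ 2 * lam n.natAbs))
          (𝓝[>] (0 : ℝ)) (𝓝 0) := by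
  obtain ⟨C, hC, hdbl⟩ := hdbl
  have hlam_pos (n : ℕ) : 0 < lam n := zero_lt_one.trans_le (hlam n)
  obtain ⟨r, hr⟩ := statement17_general (zero_lt_one.trans hC) hdbl hlam_pos
  refine ⟨2, one_lt_two, fun N _ c _ f hf ψ hψ => ?_⟩
  have hev := eventually_of_mem (Ioo_mem_nhdsGT one_pos) fun ε hε => hψ ε hε.1 hε.2
  have hnonneg (ε : ℝ) (n : ℤ) :
      0 ≤ if n = 0 then 0 else ‖fc (ψ ε) n‖ ^ 2 * lam n.natAbs := by
    have := hlam_pos n.natAbs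
    positivity
  have henergy := tendsto_tsum_ofReal_of_tsum_le
    (hev.mono fun ε ⟨_, _, _, hsum, hle⟩ => ⟨hnonneg ε, hsum, hle⟩)
    (tendsto_nhdsWithin_of_tendsto_nhds <| by simpa using (continuous_pow 2).tendsto (0 : ℝ))
  have hf_complex : ContDiff ℝ r fun t : ℝ => (f t : ℂ) :=
    Complex.ofRealCLM.contDiff.comp (hf.of_le (mod_cast le_top))
  simpa only [fc, Complex.ofReal_mul] using
    hr (ψ := fun ε x => (ψ ε x : ℂ)) hf_complex (hev.mono fun _ h => h.1.ofReal)
      (tendsto_const_nhds.congr' (hev.mono fun _ h => h.2.1.symm)) henergy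
end
end
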